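/- arXiv:2102.01474 — 2 statements merged into one kernel-verified Lean document; each statement's English description precedes it below -/
import Mathlib

section
/- Let Φ : ℂⁿ → ℝ be a strictly plurisubharmonic quadratic form and let s ∈ ℝ. For every v ∈ H^{-s}_Φ(ℂⁿ) the formula ψ_v(u) = ∫_{ℂⁿ} u(z) \overline{v(z)} e^{-2Φ(z)} dL(z), u ∈ H^s_Φ(ℂⁿ), defines a continuous linear functional on H^s_Φ(ℂⁿ) with operator norm ‖ψ_v‖ ≤ ‖v‖_{-s}, and the map v ↦ ψ_v is a bounded conjugate-linear bijection from H^{-s}_Φ(ℂⁿ) onto the continuous dual space of H^s_Φ(ℂⁿ). -/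
open Matrix MeasureTheory ENNReal

noncomputable section

/-- The squared Euclidean norm `|z|²` on `ℂⁿ`. -/
def eSq {n : ℕ} (z : Fin n → ℂ) : ℝ := ∑ i, Complex.normSq (z i)

/-- The Japanese bracket `⟨z⟩ = (1 + |z|²)^{1/2}`. -/
def jb {n : ℕ} (z : Fin n → ℂ) : ℝ := Real.sqrt (1 + eSq z)

/-- `Φ : ℂⁿ → ℝ` is a (real) quadratic form of the underlying real coordinates. -/
def IsRQuad {n : ℕ} (Φ : (Fin n → ℂ) → ℝ) : Prop :=
  ∃ B : (Fin n → ℂ) →ₗ[ℝ] (Fin n → ℂ) →ₗ[ℝ] ℝ, ∀ z, Φ z = B z z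

/-- `Φ : ℂⁿ → ℝ` is a strictly plurisubharmonic quadratic form.  For a quadratic form `Φ`,
the Levi form satisfies `(∂²_{z z̄}Φ) w ⋅ w̄ = (Φ(w) + Φ(i w))/2`, so positive definiteness of
the Levi matrix is equivalent to `Φ(w) + Φ(i·w) > 0` for all `w ≠ 0`. -/
def IsSPSH {n : ℕ} (Φ : (Fin n → ℂ) → ℝ) : Prop :=
  IsRQuad Φ ∧ ∀ z : Fin n → ℂ, z ≠ 0 → 0 < Φ z + Φ (Complex.I • z)

/-- The squared weighted norm `‖u‖_s² = ∫ |u(z)|² ⟨z⟩^{2s} e^{-2Φ(z)} L(dz)` (in `ℝ≥0∞`). -/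
def hnorm {n : ℕ} (Φ : (Fin n → ℂ) → ℝ) (s : ℝ) (u : (Fin n → ℂ) → ℂ) : ℝ≥0∞ :=
  ∫⁻ z : Fin n → ℂ, (‖u z‖₊ : ℝ≥0∞) ^ 2 * ENNReal.ofReal (jb z ^ (2 * s) * Real.exp (-2 * Φ z))

/-- A conic subset of `ℂⁿ`. -/
def IsConic {n : ℕ} (V : Set (Fin n → ℂ)) : Prop := ∀ z ∈ V, ∀ t : ℝ, 0 < t → t • z ∈ V

/-- The `1/2`-Gelfand–Shilov wavefront set of `u` relative to `Φ`: the complement in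
`ℂⁿ∖{0}` of the points having an open conic neighborhood in `ℂⁿ∖{0}` on which
`|u(z)| ≤ C e^{Φ(z) - c|z|²}`. -/
def wf {n : ℕ} (Φ : (Fin n → ℂ) → ℝ) (u : (Fin n → ℂ) → ℂ) : Set (Fin n → ℂ) :=
  {z₀ | z₀ ≠ 0 ∧ ¬ ∃ V : Set (Fin n → ℂ), IsOpen V ∧ IsConic V ∧ (0 : Fin n → ℂ) ∉ V ∧ z₀ ∈ V ∧
      ∃ C c : ℝ, 0 < C ∧ 0 < c ∧ ∀ z ∈ V, ‖u z‖ ≤ C * Real.exp (Φ z - c * eSq z)}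

/-- A holomorphic quadratic form on `ℂ^{2n} = ℂⁿ_z × ℂⁿ_θ`. -/
def IsCQuad2 {n : ℕ} (Ψ : (Fin n → ℂ) → (Fin n → ℂ) → ℂ) : Prop :=
  ∃ B : ((Fin n → ℂ) × (Fin n → ℂ)) →ₗ[ℂ] ((Fin n → ℂ) × (Fin n → ℂ)) →ₗ[ℂ] ℂ,
    ∀ z θ, Ψ z θ = B (z, θ) (z, θ)

/-- A real quadratic form on `ℂⁿ × ℂⁿ` viewed as a real vector space. -/
def IsRQuadPair {n : ℕ} (R : (Fin n → ℂ) → (Fin n → ℂ) → ℝ) : Prop :=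
  ∃ B : ((Fin n → ℂ) × (Fin n → ℂ)) →ₗ[ℝ] ((Fin n → ℂ) × (Fin n → ℂ)) →ₗ[ℝ] ℝ,
    ∀ z w, R z w = B (z, w) (z, w)

/-- The Bergman-form integral operator
`G u (z) = a ∫ e^{2Ψ(z, w̄)} u(w) e^{-2Φ(w)} L(dw)`. -/
def berg {n : ℕ} (a : ℂ) (Ψ : (Fin n → ℂ) → (Fin n → ℂ) → ℂ) (Φ : (Fin n → ℂ) → ℝ)
    (u : (Fin n → ℂ) → ℂ) (z : Fin n → ℂ) : ℂ :=
  a * ∫ w : Fin n → ℂ, Complex.exp (2 * Ψ z (star w)) * u w * (Real.exp (-2 * Φ w) : ℂ)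

/-- Membership in `H^s_Φ(ℂⁿ)`: entire with finite weighted `L²` norm. -/
def memH {n : ℕ} (Φ : (Fin n → ℂ) → ℝ) (s : ℝ) (u : (Fin n → ℂ) → ℂ) : Prop :=
  Differentiable ℂ u ∧ hnorm Φ s u < ⊤

/-- The pairing `ψ_v(u) = ∫ u(z) conj(v(z)) e^{-2Φ(z)} dL(z)`. -/
def pairΦ {n : ℕ} (Φ : (Fin n → ℂ) → ℝ) (u v : (Fin n → ℂ) → ℂ) : ℂ :=
  ∫ z : Fin n → ℂ, u z * (starRingEnd ℂ) (v z) * (Real.exp (-2 * Φ z) : ℂ)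

/-!
Completing the square, a strictly plurisubharmonic quadratic form is `Φ z = ‖A z‖² + Re q(z)` with
`A` linear and injective and `q` holomorphic. The Bergman kernel of such a potential is an explicit
Gaussian, `|K(z, w)| = C e^{Φ z + Φ w - ‖A (w - z)‖²}`, and its off-diagonal decay absorbs any
weight `e^φ` with `φ` Lipschitz, such as `φ = s log ⟨z⟩`. By Schur's test the Bergman projection is
therefore bounded on the weighted spaces, and by the mean value property it reproduces entire
functions. A functional on the space with weight `φ` is represented by some `b ∈ L²` after the
isometry `u ↦ u e^{φ - Φ}`; projecting `b e^{Φ + φ}` gives the representing element of the space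
with weight `-φ`. Pairing with the kernels `K(·, z)` recovers point values, whence uniqueness.
-/

open Complex InnerProductSpace Module
open scoped ComplexConjugate NNReal

section Gaussian

lemma one_add_rpow_mul_exp_le {c r t : ℝ} (L : ℝ) (hc : 0 < c) (hr : 0 ≤ r) (ht : 0 ≤ t) :
    (1 + t) ^ r * Real.exp (L * t - c * t ^ 2) ≤ Real.exp ((L + r) ^ 2 / (4 * c)) := by
  have hpow : (1 + t) ^ r ≤ Real.exp (r * t) := by
    rw [mul_comm, Real.exp_mul]
    exact Real.rpow_le_rpow (by positivity) (by linarith [Real.add_one_le_exp t]) hr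
  calc (1 + t) ^ r * Real.exp (L * t - c * t ^ 2)
      ≤ Real.exp (r * t) * Real.exp (L * t - c * t ^ 2) := by gcongr
    _ = Real.exp (r * t + (L * t - c * t ^ 2)) := (Real.exp_add _ _).symm
    _ ≤ Real.exp ((L + r) ^ 2 / (4 * c)) := by
      rw [Real.exp_le_exp, le_div_iff₀ (by positivity)]
      nlinarith [sq_nonneg (2 * c * t - (L + r))]

variable {E F : Type*} [NormedAddCommGroup E] [NormedSpace ℝ E] [FiniteDimensional ℝ E]
  [MeasurableSpace E] [BorelSpace E] {μ : Measure E} [μ.IsAddHaarMeasure]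

lemma integrable_exp_mul_norm_sub_mul_sq {c : ℝ} (L : ℝ) (hc : 0 < c) :
    Integrable (fun z : E ↦ Real.exp (L * ‖z‖ - c * ‖z‖ ^ 2)) μ := by
  set r : ℝ := finrank ℝ E + 1 with hr
  have hpow : Integrable (fun z : E ↦ (1 + ‖z‖) ^ (-r)) μ :=
    integrable_one_add_norm (by rw [hr]; linarith)
  refine (hpow.const_mul (Real.exp ((L + r) ^ 2 / (4 * c)))).mono'
    (by fun_prop) (.of_forall fun z ↦ ?_)
  rw [Real.norm_of_nonneg (Real.exp_pos _).le, Real.rpow_neg (by positivity),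
    ← div_eq_mul_inv, le_div_iff₀ (by positivity), mul_comm]
  exact one_add_rpow_mul_exp_le L hc (by positivity) (norm_nonneg z)

lemma integrable_exp_mul_norm_sub_mul_sq_norm_map [NormedAddCommGroup F] [NormedSpace ℝ F]
    {A : E →L[ℝ] F} (hA : Function.Injective A) {c : ℝ} (L : ℝ) (hc : 0 < c) :
    Integrable (fun z ↦ Real.exp (L * ‖z‖ - c * ‖A z‖ ^ 2)) μ := by
  obtain ⟨K, hK, hAK⟩ := (A : E →ₗ[ℝ] F).exists_antilipschitzWith (LinearMap.ker_eq_bot.2 hA)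
  refine (integrable_exp_mul_norm_sub_mul_sq L (c := c / K ^ 2) (by positivity)).mono'
    (by fun_prop) (.of_forall fun z ↦ ?_)
  have hz : ‖z‖ ≤ K * ‖A z‖ := hAK.le_mul_norm (map_zero _) z
  rw [Real.norm_of_nonneg (Real.exp_pos _).le, Real.exp_le_exp, div_mul_eq_mul_div]
  gcongr
  rw [div_le_iff₀ (by positivity), mul_assoc, ← mul_pow, mul_comm ‖A z‖]
  gcongr

end Gaussian

section Schur

lemma rpow_lintegral_mul_le_mul_lintegral {α : Type*} [MeasurableSpace α] {μ : Measure α} {p : ℝ}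
    (hp : 1 ≤ p) {G f : α → ℝ≥0∞} (hG : AEMeasurable G μ) (hf : AEMeasurable f μ) :
    (∫⁻ w, G w * f w ∂μ) ^ p ≤ (∫⁻ w, G w ∂μ) ^ (p - 1) * ∫⁻ w, G w * f w ^ p ∂μ := by
  have hp₀ : 0 < p := by linarith
  have hq : 0 ≤ 1 - p⁻¹ := sub_nonneg.2 (inv_le_one_of_one_le₀ hp)
  have hsplit (w : α) : G w ^ (1 - p⁻¹) * (G w * f w ^ p) ^ p⁻¹ = G w * f w := by
    rw [ENNReal.mul_rpow_of_nonneg _ _ (inv_nonneg.2 hp₀.le), ENNReal.rpow_rpow_inv hp₀.ne',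
      ← mul_assoc, ← ENNReal.rpow_add_of_nonneg _ _ hq (inv_nonneg.2 hp₀.le), sub_add_cancel,
      ENNReal.rpow_one]
  have hHolder := ENNReal.lintegral_mul_norm_pow_le hG (hG.mul (hf.pow_const p)) hq
    (inv_nonneg.2 hp₀.le) (sub_add_cancel _ _)
  simp only [Pi.mul_apply, hsplit] at hHolder
  calc (∫⁻ w, G w * f w ∂μ) ^ p
      ≤ ((∫⁻ w, G w ∂μ) ^ (1 - p⁻¹) * (∫⁻ w, G w * f w ^ p ∂μ) ^ p⁻¹) ^ p := by gcongr
    _ = (∫⁻ w, G w ∂μ) ^ (p - 1) * ∫⁻ w, G w * f w ^ p ∂μ := by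
      rw [ENNReal.mul_rpow_of_nonneg _ _ hp₀.le, ← ENNReal.rpow_mul, ENNReal.rpow_inv_rpow hp₀.ne',
        sub_mul, one_mul, inv_mul_cancel₀ hp₀.ne']

lemma lintegral_rpow_lintegral_sub_mul_le {α : Type*} [AddGroup α] [MeasurableSpace α]
    [MeasurableAdd₂ α] [MeasurableNeg α] {μ : Measure α} [SFinite μ] [μ.IsAddLeftInvariant]
    [μ.IsAddRightInvariant] [μ.IsNegInvariant] {p : ℝ} (hp : 1 ≤ p) {G f : α → ℝ≥0∞}
    (hG : Measurable G) (hf : AEMeasurable f μ) :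
    ∫⁻ z, (∫⁻ w, G (w - z) * f w ∂μ) ^ p ∂μ ≤ (∫⁻ w, G w ∂μ) ^ p * ∫⁻ w, f w ^ p ∂μ := by
  have hmeas : AEMeasurable (fun x : α × α ↦ G (x.2 - x.1) * f x.2 ^ p) (μ.prod μ) :=
    (by fun_prop : Measurable fun x : α × α ↦ G (x.2 - x.1)).aemeasurable.mul
      (hf.comp_snd.pow_const p)
  calc ∫⁻ z, (∫⁻ w, G (w - z) * f w ∂μ) ^ p ∂μ
      ≤ ∫⁻ z, (∫⁻ w, G w ∂μ) ^ (p - 1) * ∫⁻ w, G (w - z) * f w ^ p ∂μ ∂μ := by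
        refine lintegral_mono fun z ↦ ?_
        rw [← lintegral_sub_right_eq_self G z]
        exact rpow_lintegral_mul_le_mul_lintegral hp (by fun_prop) hf
    _ = (∫⁻ w, G w ∂μ) ^ (p - 1) * ∫⁻ w, ∫⁻ z, G (w - z) * f w ^ p ∂μ ∂μ := by
        rw [lintegral_const_mul'' _ hmeas.lintegral_prod_right', lintegral_lintegral_swap hmeas]
    _ = (∫⁻ w, G w ∂μ) ^ (p - 1) * ((∫⁻ w, G w ∂μ) * ∫⁻ w, f w ^ p ∂μ) := by
        rw [← lintegral_const_mul'' _ (hf.pow_const p)]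
        congr! with w
        rw [lintegral_mul_const _ (by fun_prop), lintegral_sub_left_eq_self G w]
    _ = (∫⁻ w, G w ∂μ) ^ p * ∫⁻ w, f w ^ p ∂μ := by
        nth_rw 2 [← ENNReal.rpow_one (∫⁻ w, G w ∂μ)]
        rw [← mul_assoc, ← ENNReal.rpow_add_of_nonneg _ _ (by linarith) zero_le_one, sub_add_cancel]

lemma lintegral_mul_lintegral_sub_mul_le {α : Type*} [AddGroup α] [MeasurableSpace α]
    [MeasurableAdd₂ α] [MeasurableNeg α] {μ : Measure α} [SFinite μ] [μ.IsAddLeftInvariant]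
    [μ.IsAddRightInvariant] [μ.IsNegInvariant] {p q : ℝ} (hpq : p.HolderConjugate q)
    {G f h : α → ℝ≥0∞} (hG : Measurable G) (hf : AEMeasurable f μ) (hh : AEMeasurable h μ) :
    ∫⁻ z, f z * ∫⁻ w, G (w - z) * h w ∂μ ∂μ
      ≤ (∫⁻ z, f z ^ p ∂μ) ^ (1 / p) * ((∫⁻ w, G w ∂μ) ^ q * ∫⁻ w, h w ^ q ∂μ) ^ (1 / q) := by
  have hmeas : AEMeasurable (fun x : α × α ↦ G (x.2 - x.1) * h x.2) (μ.prod μ) :=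
    (by fun_prop : Measurable fun x : α × α ↦ G (x.2 - x.1)).aemeasurable.mul hh.comp_snd
  refine (ENNReal.lintegral_mul_le_Lp_mul_Lq μ hpq hf hmeas.lintegral_prod_right').trans ?_
  have := one_div_nonneg.2 hpq.symm.nonneg
  gcongr
  exact lintegral_rpow_lintegral_sub_mul_le hpq.symm.lt.le hG hh

end Schur

section MeanValue

lemma circleAverage_comp_smul {E : Type*} [NormedAddCommGroup E] [NormedSpace ℂ E] {g : E → ℂ}
    (hg : Differentiable ℂ g) (z : E) : Real.circleAverage (fun t : ℂ ↦ g (t • z)) 0 1 = g 0 := by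
  have hdiff : Differentiable ℂ fun t : ℂ ↦ g (t • z) := by fun_prop
  simpa using (hdiff.diffContOnCl (s := Metric.ball 0 |1|)).circleAverage

variable {E : Type*} [NormedAddCommGroup E] [NormedSpace ℂ E] [FiniteDimensional ℂ E]
  [MeasurableSpace E] [BorelSpace E] {μ : Measure E} [μ.IsAddHaarMeasure]

lemma measurePreserving_smul_of_norm_eq_one {a : ℂ} (ha : ‖a‖ = 1) :
    MeasurePreserving (fun z : E ↦ a • z) μ μ := by
  set f : E →ₗ[ℝ] E := (a • LinearMap.id : E →ₗ[ℂ] E).restrictScalars ℝ with hf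
  have hdet : |f.det| = 1 := by
    rw [hf, LinearMap.det_restrictScalars, LinearMap.det_smul, LinearMap.det_id, mul_one,
      Algebra.norm_complex_apply, normSq_eq_norm_sq, norm_pow, ha]
    simp
  refine ⟨by fun_prop, ?_⟩
  have hmap := Measure.map_linearMap_addHaar_eq_smul_addHaar μ (f := f)
    (abs_pos.1 (hdet.symm ▸ one_pos))
  rwa [abs_inv, hdet, inv_one, ENNReal.ofReal_one, one_smul] at hmap

lemma integral_circleAverage_smul {f : E → ℂ} (hf : Continuous f) (hint : Integrable f μ) :
    ∫ z, Real.circleAverage (fun t : ℂ ↦ f (t • z)) 0 1 ∂μ = ∫ z, f z ∂μ := by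
  have hmp (θ : ℝ) : MeasurePreserving (fun z : E ↦ circleMap 0 1 θ • z) μ μ :=
    measurePreserving_smul_of_norm_eq_one (by simp)
  have hemb (θ : ℝ) : MeasurableEmbedding fun z : E ↦ circleMap 0 1 θ • z :=
    (Homeomorph.smulOfNeZero _ (circleMap_ne_center one_ne_zero)).measurableEmbedding
  have hprod : Integrable (Function.uncurry fun (θ : ℝ) (z : E) ↦ f (circleMap 0 1 θ • z))
      ((volume.restrict (Set.Ioc 0 (2 * Real.pi))).prod μ) := by
    rw [integrable_prod_iff (by fun_prop)]
    refine ⟨.of_forall fun θ ↦ (hmp θ).integrable_comp_of_integrable hint, ?_⟩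
    refine (integrable_const (∫ z, ‖f z‖ ∂μ)).congr (.of_forall fun θ ↦ ?_)
    exact ((hmp θ).integral_comp (hemb θ) fun z ↦ ‖f z‖).symm
  simp only [Real.circleAverage_def, intervalIntegral.integral_of_le Real.two_pi_pos.le]
  rw [integral_smul, ← integral_integral_swap hprod]
  simp only [(hmp _).integral_comp (hemb _) f]
  rw [setIntegral_const, Real.volume_real_Ioc_of_le Real.two_pi_pos.le, sub_zero,
    inv_smul_smul₀ Real.two_pi_pos.ne']

lemma integral_mul_eq_of_norm_smul_invariant {g ρ : E → ℂ} (hg : Differentiable ℂ g)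
    (hρ : Continuous ρ) (hrot : ∀ a : ℂ, ‖a‖ = 1 → ∀ z, ρ (a • z) = ρ z)
    (hint : Integrable (fun z ↦ g z * ρ z) μ) :
    ∫ z, g z * ρ z ∂μ = g 0 * ∫ z, ρ z ∂μ := by
  rw [← integral_circleAverage_smul (f := fun z ↦ g z * ρ z) (hg.continuous.mul hρ) hint,
    ← integral_const_mul]
  refine integral_congr_ae (.of_forall fun z ↦ ?_)
  calc Real.circleAverage (fun t : ℂ ↦ g (t • z) * ρ (t • z)) 0 1
      = Real.circleAverage (ρ z • fun t : ℂ ↦ g (t • z)) 0 1 := by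
        refine Real.circleAverage_congr_sphere fun t ht ↦ ?_
        have ht : ‖t‖ = 1 := by simpa using ht
        simp only [hrot t ht, Pi.smul_apply, smul_eq_mul, mul_comm]
    _ = g 0 * ρ z := by
        rw [Real.circleAverage_smul, circleAverage_comp_smul hg, smul_eq_mul, mul_comm]

end MeanValue

section Laplace

lemma norm_cexp_clm_apply_le {E : Type*} [NormedAddCommGroup E] [NormedSpace ℂ E] (ℓ : E →L[ℂ] ℂ)
    (z : E) : ‖cexp (ℓ z)‖ ≤ Real.exp (‖z‖ * ‖ℓ‖) := by
  rw [norm_exp, mul_comm]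
  exact Real.exp_le_exp.2 ((re_le_norm _).trans (ℓ.le_opNorm z))

lemma differentiable_integral_cexp_mul {X E : Type*} [MeasurableSpace X] {μ : Measure X}
    [NormedAddCommGroup E] [NormedSpace ℂ E] {ℓ : X → E →L[ℂ] ℂ} {R : X → ℂ}
    (hℓ : AEStronglyMeasurable ℓ μ) (hR : AEStronglyMeasurable R μ)
    (hint : ∀ a : ℝ, Integrable (fun x ↦ Real.exp (a * ‖ℓ x‖) * ‖R x‖) μ) :
    Differentiable ℂ fun z ↦ ∫ x, cexp (ℓ x z) * R x ∂μ := by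
  have hmeas (z : E) : AEStronglyMeasurable (fun x ↦ cexp (ℓ x z) * R x) μ :=
    (continuous_exp.comp_aestronglyMeasurable
      (hℓ.apply_continuousLinearMap z)).mul hR
  intro z₀
  refine (hasFDerivAt_integral_of_dominated_of_fderiv_le (Metric.ball_mem_nhds z₀ one_pos)
    (F := fun z x ↦ cexp (ℓ x z) * R x) (F' := fun z x ↦ (cexp (ℓ x z) * R x) • ℓ x)
    (bound := fun x ↦ Real.exp ((‖z₀‖ + 2) * ‖ℓ x‖) * ‖R x‖) (.of_forall hmeas) ?_
    ((hmeas z₀).smul hℓ) (.of_forall fun x z hz ↦ ?_) (hint _) (.of_forall fun x z _ ↦ ?_)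
    ).differentiableAt
  · refine (hint ‖z₀‖).mono' (hmeas z₀) (.of_forall fun x ↦ ?_)
    rw [norm_mul]
    gcongr
    exact norm_cexp_clm_apply_le (ℓ x) z₀
  · have hz : ‖z‖ ≤ ‖z₀‖ + 1 := (norm_lt_of_mem_ball hz).le
    have hℓx : ‖ℓ x‖ ≤ Real.exp ‖ℓ x‖ := by linarith [Real.add_one_le_exp ‖ℓ x‖]
    calc ‖(cexp (ℓ x z) * R x) • ℓ x‖ = ‖cexp (ℓ x z)‖ * ‖ℓ x‖ * ‖R x‖ := by
          rw [norm_smul, norm_mul, mul_right_comm]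
      _ ≤ Real.exp ((‖z₀‖ + 1) * ‖ℓ x‖) * Real.exp ‖ℓ x‖ * ‖R x‖ := by
          gcongr
          exact (norm_cexp_clm_apply_le (ℓ x) z).trans (by gcongr)
      _ = Real.exp ((‖z₀‖ + 2) * ‖ℓ x‖) * ‖R x‖ := by rw [← Real.exp_add]; ring_nf
  · simpa only [smul_smul, mul_comm (R x)] using ((ℓ x).hasFDerivAt.cexp).mul_const (R x)

end Laplace

section Riesz

lemma exists_eq_inner_map_of_norm_le {𝕜 V H : Type*} [RCLike 𝕜] [AddCommGroup V] [Module 𝕜 V]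
    [NormedAddCommGroup H] [InnerProductSpace 𝕜 H] [CompleteSpace H] (e : V →ₗ[𝕜] H)
    (ψ : V →ₗ[𝕜] 𝕜) (hψ : ∃ K : ℝ, ∀ u, ‖ψ u‖ ≤ K * ‖e u‖) :
    ∃ b : H, ∀ u, ψ u = inner 𝕜 b (e u) := by
  obtain ⟨g, hg, -⟩ := exists_extension_norm_eq (LinearMap.range e) (ψ.compLeftInverse e)
  refine ⟨(toDual 𝕜 H).symm g, fun u ↦ ?_⟩
  rw [toDual_symm_apply, hg ⟨e u, u, rfl⟩, LinearMap.compLeftInverse_apply_of_bdd ψ e hψ u _ rfl]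

end Riesz

section Weighted

variable {E : Type*} {Φ φ : E → ℝ} {u v : E → ℂ} {c : ℂ}

/-- The function `u e^{φ - Φ}`, whose `L²` norm is the norm of `u` in the Fock space with potential
`Φ` and logarithmic weight `φ`. -/
def weighted (Φ φ : E → ℝ) (u : E → ℂ) (z : E) : ℂ := u z * (Real.exp (φ z - Φ z) : ℝ)

lemma weighted_add : weighted Φ φ (u + v) = weighted Φ φ u + weighted Φ φ v :=
  funext fun _ ↦ add_mul _ _ _

lemma weighted_smul : weighted Φ φ (c • u) = c • weighted Φ φ u :=
  funext fun _ ↦ mul_assoc _ _ _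

lemma norm_weighted (z : E) : ‖weighted Φ φ u z‖ = ‖u z‖ * Real.exp (φ z - Φ z) := by
  simp only [weighted, norm_mul, norm_real, Real.norm_eq_abs, Real.abs_exp]

lemma inner_weighted_neg (u v : E → ℂ) (z : E) :
    inner ℂ (weighted Φ (-φ) v z) (weighted Φ φ u z)
      = u z * conj (v z) * (Real.exp (-2 * Φ z) : ℝ) := by
  have hexp : Real.exp (-2 * Φ z) = Real.exp ((-φ) z - Φ z) * Real.exp (φ z - Φ z) := by
    rw [← Real.exp_add, Pi.neg_apply]; ring_nf
  rw [hexp, RCLike.inner_apply, weighted, weighted, map_mul, conj_ofReal, Complex.ofReal_mul]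
  ring

lemma continuous_weighted [TopologicalSpace E] (hΦ : Continuous Φ) (hφ : Continuous φ)
    (hu : Continuous u) : Continuous (weighted Φ φ u) := by
  unfold weighted
  fun_prop

end Weighted

section Pairing

variable {E : Type*} [MeasurableSpace E] {μ : Measure E} {Φ : E → ℝ}

/-- The pairing `∫ u v̄ e^{-2Φ} dμ` of `fockSpace μ Φ φ` with `fockSpace μ Φ (-φ)`. -/
def fockPairing (μ : Measure E) (Φ : E → ℝ) (u v : E → ℂ) : ℂ :=
  ∫ z, u z * conj (v z) * (Real.exp (-2 * Φ z) : ℝ) ∂μ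

lemma fockPairing_smul (c : ℂ) (u v : E → ℂ) :
    fockPairing μ Φ u (c • v) = conj c * fockPairing μ Φ u v := by
  simp only [fockPairing, ← integral_const_mul, Pi.smul_apply, smul_eq_mul, map_mul, mul_assoc,
    mul_left_comm (conj c)]

lemma conj_fockPairing (u v : E → ℂ) : conj (fockPairing μ Φ u v) = fockPairing μ Φ v u := by
  simp only [fockPairing, ← integral_conj, map_mul, conj_conj, conj_ofReal, mul_comm (conj (u _))]

end Pairing

section Fock

variable {E : Type*} [NormedAddCommGroup E] [NormedSpace ℂ E] [MeasurableSpace E]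
  {μ : Measure E} {Φ φ : E → ℝ} {u v v₁ v₂ : E → ℂ}

/-- The Fock space of entire functions `u` with `∫ |u|² e^{2(φ - Φ)} dμ < ∞`. The space `H^s_Φ` is
the case `φ = s log ⟨z⟩`; in this logarithmic form the weight of the dual space is `-φ`. -/
def fockSpace (μ : Measure E) (Φ φ : E → ℝ) : Submodule ℂ (E → ℂ) where
  carrier := {u | Differentiable ℂ u ∧ MemLp (weighted Φ φ u) 2 μ}
  add_mem' hu hv := ⟨hu.1.add hv.1, weighted_add ▸ hu.2.add hv.2⟩
  zero_mem' := by
    have hzero : weighted Φ φ (0 : E → ℂ) = 0 := funext fun _ ↦ zero_mul _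
    exact ⟨differentiable_const 0, by rw [hzero]; exact MemLp.zero⟩
  smul_mem' c _ hu := ⟨hu.1.const_smul c, weighted_smul ▸ hu.2.const_smul c⟩

/-- The norm of the Fock space: the `L²` norm of `u e^{φ - Φ}`, with junk value `0` where that is
infinite. -/
def fockNorm (μ : Measure E) (Φ φ : E → ℝ) (u : E → ℂ) : ℝ :=
  (eLpNorm (weighted Φ φ u) 2 μ).toReal

/-- The isometry `u ↦ u e^{φ - Φ}` of the Fock space into `L²`. -/
def fockToLp (μ : Measure E) (Φ φ : E → ℝ) : fockSpace μ Φ φ →ₗ[ℂ] Lp ℂ 2 μ where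
  toFun u := u.2.2.toLp
  map_add' u v := by
    simp only [Submodule.coe_add, weighted_add]
    exact MemLp.toLp_add u.2.2 v.2.2
  map_smul' c u := by
    simp only [Submodule.coe_smul, weighted_smul]
    exact MemLp.toLp_const_smul c u.2.2

lemma norm_fockToLp (u : fockSpace μ Φ φ) : ‖fockToLp μ Φ φ u‖ = fockNorm μ Φ φ u :=
  Lp.norm_toLp _ u.2.2

lemma inner_fockToLp_ae_eq (hu : u ∈ fockSpace μ Φ φ) (hv : v ∈ fockSpace μ Φ (-φ)) :
    (fun z ↦ inner ℂ (fockToLp μ Φ (-φ) ⟨v, hv⟩ z) (fockToLp μ Φ φ ⟨u, hu⟩ z))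
      =ᵐ[μ] fun z ↦ u z * conj (v z) * (Real.exp (-2 * Φ z) : ℝ) := by
  filter_upwards [MemLp.coeFn_toLp hu.2, MemLp.coeFn_toLp hv.2] with z hu_z hv_z
  rw [← inner_weighted_neg (φ := φ), ← hu_z, ← hv_z]
  rfl

lemma integrable_fockPairing (hu : u ∈ fockSpace μ Φ φ) (hv : v ∈ fockSpace μ Φ (-φ)) :
    Integrable (fun z ↦ u z * conj (v z) * (Real.exp (-2 * Φ z) : ℝ)) μ :=
  (L2.integrable_inner _ _).congr (inner_fockToLp_ae_eq hu hv)

lemma fockPairing_eq_inner (hu : u ∈ fockSpace μ Φ φ) (hv : v ∈ fockSpace μ Φ (-φ)) :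
    fockPairing μ Φ u v = inner ℂ (fockToLp μ Φ (-φ) ⟨v, hv⟩) (fockToLp μ Φ φ ⟨u, hu⟩) :=
  (integral_congr_ae (inner_fockToLp_ae_eq hu hv)).symm.trans (L2.inner_def _ _).symm

lemma norm_fockPairing_le (hu : u ∈ fockSpace μ Φ φ) (hv : v ∈ fockSpace μ Φ (-φ)) :
    ‖fockPairing μ Φ u v‖ ≤ fockNorm μ Φ (-φ) v * fockNorm μ Φ φ u := by
  rw [fockPairing_eq_inner hu hv]
  simpa only [norm_fockToLp] using
    norm_inner_le_norm (𝕜 := ℂ) (fockToLp μ Φ (-φ) ⟨v, hv⟩) (fockToLp μ Φ φ ⟨u, hu⟩)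

lemma fockPairing_add (hu : u ∈ fockSpace μ Φ φ) (hv₁ : v₁ ∈ fockSpace μ Φ (-φ))
    (hv₂ : v₂ ∈ fockSpace μ Φ (-φ)) :
    fockPairing μ Φ u (v₁ + v₂) = fockPairing μ Φ u v₁ + fockPairing μ Φ u v₂ := by
  unfold fockPairing
  rw [← integral_add (integrable_fockPairing hu hv₁) (integrable_fockPairing hu hv₂)]
  simp only [Pi.add_apply, map_add, mul_add, add_mul]

end Fock

section Kernel

variable {E F : Type*} [NormedAddCommGroup E] [NormedSpace ℂ E] [NormedAddCommGroup F]
  [InnerProductSpace ℂ F] {A : E →L[ℂ] F} {q : E → ℂ}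

/-- The potential `‖A z‖² + Re q(z)`. Every strictly plurisubharmonic quadratic form is of this form
with `A` injective and `q` a holomorphic quadratic form. -/
def potential (A : E →L[ℂ] F) (q : E → ℂ) (z : E) : ℝ := ‖A z‖ ^ 2 + (q z).re

lemma continuous_potential (hq : Continuous q) : Continuous (potential A q) := by
  unfold potential
  fun_prop

variable [MeasurableSpace E] {μ : Measure E} {φ : E → ℝ} {L : ℝ≥0}

/-- The Gaussian integral `∫ e^{-2‖A z‖²} dμ` normalizing the Bergman kernel. -/
def gaussMass (A : E →L[ℂ] F) (μ : Measure E) : ℝ := ∫ z, Real.exp (-2 * ‖A z‖ ^ 2) ∂μ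

/-- The Bergman kernel of the potential `‖A z‖² + Re q(z)`: the integral kernel of the orthogonal
projection of `L²(e^{-2Φ} dμ)` onto its entire functions. -/
def bergmanKernel (A : E →L[ℂ] F) (q : E → ℂ) (μ : Measure E) (z w : E) : ℂ :=
  (gaussMass A μ : ℂ)⁻¹ * cexp (2 * inner ℂ (A w) (A z) + q z + conj (q w))

/-- The Gaussian convolution kernel that dominates the Bergman kernel between spaces whose
logarithmic weight is `L`-Lipschitz. -/
def kernelMajorant (A : E →L[ℂ] F) (μ : Measure E) (L : ℝ≥0) (d : E) : ℝ :=
  (gaussMass A μ)⁻¹ * Real.exp (L * ‖d‖ - ‖A d‖ ^ 2)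

lemma gaussMass_nonneg : 0 ≤ gaussMass A μ := integral_nonneg fun _ ↦ (Real.exp_pos _).le

lemma conj_bergmanKernel (z w : E) :
    conj (bergmanKernel A q μ z w) = bergmanKernel A q μ w z := by
  simp only [bergmanKernel, map_mul, map_inv₀, conj_ofReal, ← exp_conj, map_add, inner_conj_symm,
    conj_conj, conj_ofNat, add_right_comm]

lemma norm_bergmanKernel (z w : E) :
    ‖bergmanKernel A q μ z w‖ = (gaussMass A μ)⁻¹ *
      Real.exp (potential A q z + potential A q w - ‖A (w - z)‖ ^ 2) := by
  have hre : (2 * inner ℂ (A w) (A z) + q z + conj (q w)).re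
      = potential A q z + potential A q w - ‖A (w - z)‖ ^ 2 := by
    rw [map_sub, norm_sub_sq (𝕜 := ℂ), potential, potential, add_re, add_re, conj_re]
    simp only [mul_re, re_ofNat, im_ofNat, zero_mul, sub_zero, RCLike.re_to_complex]
    ring
  rw [bergmanKernel, norm_mul, norm_exp, hre, norm_inv, norm_real,
    Real.norm_of_nonneg gaussMass_nonneg]

lemma norm_weighted_bergmanKernel_le (hφ : LipschitzWith L φ) (z w : E) :
    ‖weighted (potential A q) φ (bergmanKernel A q μ · w) z‖
      ≤ kernelMajorant A μ L (w - z) * Real.exp (φ w + potential A q w) := by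
  have hφzw : φ z ≤ φ w + L * ‖w - z‖ := by
    rw [← dist_eq_norm, dist_comm]
    exact hφ.le_add_mul z w
  have hC := inv_nonneg.2 (gaussMass_nonneg (A := A) (μ := μ))
  rw [norm_weighted, norm_bergmanKernel, kernelMajorant, mul_assoc, mul_assoc, ← Real.exp_add,
    ← Real.exp_add]
  refine mul_le_mul_of_nonneg_left (Real.exp_le_exp.2 ?_) hC
  linarith

lemma differentiable_bergmanKernel (hq : Differentiable ℂ q) (w : E) :
    Differentiable ℂ (bergmanKernel A q μ · w) := by
  have hinner : Differentiable ℂ fun z ↦ inner ℂ (A w) (A z) :=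
    ((innerSL ℂ (A w)).comp A).differentiable
  unfold bergmanKernel
  fun_prop

lemma continuous_bergmanKernel (hq : Continuous q) :
    Continuous fun x : E × E ↦ bergmanKernel A q μ x.1 x.2 := by
  unfold bergmanKernel
  fun_prop

lemma continuous_kernelMajorant : Continuous (kernelMajorant A μ L) := by
  unfold kernelMajorant
  fun_prop

variable [FiniteDimensional ℂ E] [BorelSpace E] [μ.IsAddHaarMeasure]

lemma integrable_exp_neg_two_mul_sq (hA : Function.Injective A) :
    Integrable (fun z ↦ Real.exp (-2 * ‖A z‖ ^ 2)) μ := by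
  simpa only [zero_mul, zero_sub, neg_mul, ContinuousLinearMap.coe_restrictScalars'] using
    integrable_exp_mul_norm_sub_mul_sq_norm_map (A := A.restrictScalars ℝ) hA 0 two_pos

lemma gaussMass_pos (hA : Function.Injective A) : 0 < gaussMass A μ :=
  integral_exp_pos (integrable_exp_neg_two_mul_sq hA)

lemma lintegral_kernelMajorant_lt_top (hA : Function.Injective A) :
    ∫⁻ d, ENNReal.ofReal (kernelMajorant A μ L d) ∂μ < ∞ := by
  have hint : Integrable (kernelMajorant A μ L) μ := by
    unfold kernelMajorant
    simpa only [one_mul, ContinuousLinearMap.coe_restrictScalars'] using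
      (integrable_exp_mul_norm_sub_mul_sq_norm_map (A := A.restrictScalars ℝ) hA L
        one_pos).const_mul _
  exact hint.lintegral_lt_top

lemma memLp_two_exp_mul_norm_sub_sq (hA : Function.Injective A) (a : ℝ) :
    MemLp (fun z ↦ Real.exp (a * ‖z‖ - ‖A z‖ ^ 2)) 2 μ := by
  rw [memLp_two_iff_integrable_sq (by fun_prop)]
  refine (integrable_exp_mul_norm_sub_mul_sq_norm_map (A := A.restrictScalars ℝ) hA (2 * a)
    two_pos).congr (.of_forall fun z ↦ ?_)
  simp only [← Real.exp_nat_mul, Nat.cast_ofNat, mul_sub, mul_assoc,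
    ContinuousLinearMap.coe_restrictScalars']

lemma bergmanKernel_mem_fockSpace (hA : Function.Injective A) (hq : Differentiable ℂ q)
    (hφ : LipschitzWith L φ) (w : E) :
    (bergmanKernel A q μ · w) ∈ fockSpace μ (potential A q) φ := by
  have hdiff := differentiable_bergmanKernel (A := A) (μ := μ) hq w
  have hmajorant : MemLp (fun z ↦ kernelMajorant A μ L (w - z)) 2 μ :=
    ((memLp_two_exp_mul_norm_sub_sq hA L).const_mul _).comp_measurePreserving
      (Measure.measurePreserving_sub_left μ w)
  refine ⟨hdiff, (hmajorant.mul_const (Real.exp (φ w + potential A q w))).of_le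
    (continuous_weighted (continuous_potential hq.continuous) hφ.continuous
      hdiff.continuous).aestronglyMeasurable (.of_forall fun z ↦ ?_)⟩
  exact (norm_weighted_bergmanKernel_le hφ z w).trans (Real.le_norm_self _)

end Kernel

section Reproducing

variable {E F : Type*} [NormedAddCommGroup E] [NormedSpace ℂ E] [NormedAddCommGroup F]
  [InnerProductSpace ℂ F] {A : E →L[ℂ] F} {q : E → ℂ}
  [MeasurableSpace E] {μ : Measure E} {φ : E → ℝ} {L : ℝ≥0} {u : E → ℂ}

lemma bergmanKernel_add_mul_exp (z ζ : E) :
    bergmanKernel A q μ z (z + ζ) * (Real.exp (-2 * potential A q (z + ζ)) : ℝ)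
      = (gaussMass A μ : ℂ)⁻¹ * cexp (q z - q (z + ζ) - 2 * inner ℂ (A z) (A ζ))
        * (Real.exp (-2 * ‖A ζ‖ ^ 2) : ℝ) := by
  have hnorm : ((‖A (z + ζ)‖ : ℂ)) ^ 2
      = ‖A z‖ ^ 2 + inner ℂ (A z) (A ζ) + inner ℂ (A ζ) (A z) + ‖A ζ‖ ^ 2 := by
    simpa only [map_add, inner_self_eq_norm_sq_to_K, coe_algebraMap] using
      inner_add_add_self (𝕜 := ℂ) (A z) (A ζ)
  have hpotential : ((-2 * potential A q (z + ζ) : ℝ) : ℂ)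
      = -2 * (‖A z‖ ^ 2 + inner ℂ (A z) (A ζ) + inner ℂ (A ζ) (A z) + ‖A ζ‖ ^ 2)
        - (q (z + ζ) + conj (q (z + ζ))) := by
    rw [← hnorm, add_conj, potential]
    push_cast
    ring
  rw [bergmanKernel, Complex.ofReal_exp, Complex.ofReal_exp, hpotential, mul_assoc,
    ← Complex.exp_add, mul_assoc, ← Complex.exp_add, map_add, inner_add_left,
    inner_self_eq_norm_sq_to_K]
  congr 2
  push_cast [coe_algebraMap]
  ring

variable [FiniteDimensional ℂ E] [BorelSpace E] [μ.IsAddHaarMeasure]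

/- The mean value property about `z`, for the weight `e^{-2‖A ζ‖²}` which is invariant under
multiplication of `ζ` by unimodular scalars. -/
lemma fockPairing_bergmanKernel (hA : Function.Injective A) (hq : Differentiable ℂ q)
    (hφ : LipschitzWith L φ) (hu : u ∈ fockSpace μ (potential A q) φ) (z : E) :
    fockPairing μ (potential A q) u (bergmanKernel A q μ · z) = u z := by
  set g : E → ℂ := fun ζ ↦
    u (z + ζ) * ((gaussMass A μ : ℂ)⁻¹ * cexp (q z - q (z + ζ) - 2 * inner ℂ (A z) (A ζ))) with hg
  have hinner : Differentiable ℂ fun ζ ↦ inner ℂ (A z) (A ζ) :=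
    ((innerSL ℂ (A z)).comp A).differentiable
  have hg_diff : Differentiable ℂ g := by
    have := hu.1
    fun_prop
  have hshift (ζ : E) : u (z + ζ) * conj (bergmanKernel A q μ (z + ζ) z) *
      (Real.exp (-2 * potential A q (z + ζ)) : ℝ) = g ζ * (Real.exp (-2 * ‖A ζ‖ ^ 2) : ℝ) := by
    rw [conj_bergmanKernel, mul_assoc, bergmanKernel_add_mul_exp, ← mul_assoc]
  have hint : Integrable (fun ζ ↦ g ζ * (Real.exp (-2 * ‖A ζ‖ ^ 2) : ℝ)) μ := by
    simpa only [hshift] using (integrable_fockPairing hu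
      (bergmanKernel_mem_fockSpace hA hq hφ.neg z)).comp_add_left z
  have hmass : (gaussMass A μ : ℂ) ≠ 0 := ofReal_ne_zero.2 (gaussMass_pos hA).ne'
  calc fockPairing μ (potential A q) u (bergmanKernel A q μ · z)
      = ∫ ζ, g ζ * (Real.exp (-2 * ‖A ζ‖ ^ 2) : ℝ) ∂μ := by
        rw [fockPairing, ← integral_add_left_eq_self _ z]
        simp only [hshift]
    _ = g 0 * ∫ ζ, ((Real.exp (-2 * ‖A ζ‖ ^ 2) : ℝ) : ℂ) ∂μ :=
        integral_mul_eq_of_norm_smul_invariant hg_diff (by fun_prop)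
          (fun a ha ζ ↦ by rw [map_smul, norm_smul, ha, one_mul]) hint
    _ = u z := by
        rw [integral_complex_ofReal, ← gaussMass, hg]
        simp [hmass]

end Reproducing

section Projection

variable {E F : Type*} [NormedAddCommGroup E] [NormedSpace ℂ E] [NormedAddCommGroup F]
  [InnerProductSpace ℂ F] {A : E →L[ℂ] F} {q : E → ℂ} {φ : E → ℝ} {L : ℝ≥0} {b : E → ℂ}

lemma norm_innerSL_map_comp_le (A : E →L[ℂ] F) (w : E) :
    ‖(innerSL ℂ (A w)).comp A‖ ≤ ‖A‖ ^ 2 * ‖w‖ :=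
  calc ‖(innerSL ℂ (A w)).comp A‖ ≤ ‖A w‖ * ‖A‖ := by
        rw [← innerSL_apply_norm ℂ (A w)]
        exact ContinuousLinearMap.opNorm_comp_le _ _
    _ ≤ ‖A‖ * ‖w‖ * ‖A‖ := by
        gcongr
        exact A.le_opNorm w
    _ = ‖A‖ ^ 2 * ‖w‖ := by ring

lemma norm_cexp_conj_mul_weighted_le (hφ : LipschitzWith L φ) (w : E) :
    ‖cexp (conj (q w)) * weighted (potential A q) φ b w‖
      ≤ Real.exp (φ 0) * Real.exp (L * ‖w‖ - ‖A w‖ ^ 2) * ‖b w‖ := by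
  have hφw : φ w ≤ φ 0 + L * ‖w‖ := by
    simpa only [dist_zero_right] using hφ.le_add_mul w 0
  rw [norm_mul, norm_exp, norm_weighted, conj_re, mul_left_comm, mul_comm, ← Real.exp_add,
    ← Real.exp_add, potential]
  refine mul_le_mul_of_nonneg_right (Real.exp_le_exp.2 ?_) (norm_nonneg _)
  linarith

variable [MeasurableSpace E] {μ : Measure E}

/-- The Bergman projection of `b e^{Φ + φ}`, where `Φ = ‖A z‖² + Re q(z)`, written in terms of `b`
itself, which is an arbitrary element of `L²(μ)`. -/
def bergmanProj (A : E →L[ℂ] F) (q : E → ℂ) (μ : Measure E) (φ : E → ℝ) (b : E → ℂ) (z : E) : ℂ :=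
  ∫ w, bergmanKernel A q μ z w * weighted (potential A q) φ b w ∂μ

lemma weighted_bergmanProj (z : E) :
    weighted (potential A q) (-φ) (bergmanProj A q μ φ b) z
      = ∫ w, weighted (potential A q) (-φ) (bergmanKernel A q μ · w) z *
          weighted (potential A q) φ b w ∂μ := by
  simp only [weighted, bergmanProj, ← integral_mul_const, mul_right_comm]

lemma enorm_weighted_bergmanKernel_mul_weighted_le (hφ : LipschitzWith L φ) (z w : E) :
    ‖weighted (potential A q) (-φ) (bergmanKernel A q μ · w) z * weighted (potential A q) φ b w‖ₑ
      ≤ ENNReal.ofReal (kernelMajorant A μ L (w - z)) * ‖b w‖ₑ := by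
  rw [← ofReal_norm, ← ofReal_norm, ← ENNReal.ofReal_mul' (norm_nonneg _), norm_mul]
  refine ENNReal.ofReal_le_ofReal ?_
  calc ‖weighted (potential A q) (-φ) (bergmanKernel A q μ · w) z‖ *
        ‖weighted (potential A q) φ b w‖
      ≤ kernelMajorant A μ L (w - z) * Real.exp ((-φ) w + potential A q w) *
          (‖b w‖ * Real.exp (φ w - potential A q w)) := by
        rw [norm_weighted (u := b)]
        gcongr
        exact norm_weighted_bergmanKernel_le hφ.neg z w
    _ = kernelMajorant A μ L (w - z) * ‖b w‖ *
          Real.exp (((-φ) w + potential A q w) + (φ w - potential A q w)) := by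
        rw [Real.exp_add ((-φ) w + potential A q w)]
        ring
    _ = kernelMajorant A μ L (w - z) * ‖b w‖ := by
        rw [Pi.neg_apply, add_comm, sub_add_add_cancel, add_neg_cancel, Real.exp_zero, mul_one]

lemma enorm_weighted_bergmanProj_le (hφ : LipschitzWith L φ) (z : E) :
    ‖weighted (potential A q) (-φ) (bergmanProj A q μ φ b) z‖ₑ
      ≤ ∫⁻ w, ENNReal.ofReal (kernelMajorant A μ L (w - z)) * ‖b w‖ₑ ∂μ := by
  rw [weighted_bergmanProj]
  exact (enorm_integral_le_lintegral_enorm _).trans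
    (lintegral_mono (enorm_weighted_bergmanKernel_mul_weighted_le hφ z))

variable [FiniteDimensional ℂ E] [BorelSpace E] [μ.IsAddHaarMeasure]

lemma integrable_exp_mul_norm_cexp_conj_mul_weighted (hA : Function.Injective A)
    (hR : AEStronglyMeasurable (fun w ↦ cexp (conj (q w)) * weighted (potential A q) φ b w) μ)
    (hφ : LipschitzWith L φ) (hb : MemLp b 2 μ) (a : ℝ) :
    Integrable (fun w ↦
      Real.exp (a * ‖w‖) * ‖cexp (conj (q w)) * weighted (potential A q) φ b w‖) μ := by
  have hdom : Integrable (fun w ↦ Real.exp (φ 0) *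
      (Real.exp ((a + L) * ‖w‖ - ‖A w‖ ^ 2) * ‖b w‖)) μ :=
    ((memLp_two_exp_mul_norm_sub_sq hA (a + L)).integrable_mul hb.norm).const_mul _
  refine hdom.mono' (by fun_prop) (.of_forall fun w ↦ ?_)
  rw [norm_mul, norm_norm, Real.norm_eq_abs, Real.abs_exp]
  calc Real.exp (a * ‖w‖) * ‖cexp (conj (q w)) * weighted (potential A q) φ b w‖
      ≤ Real.exp (a * ‖w‖) * (Real.exp (φ 0) * Real.exp (L * ‖w‖ - ‖A w‖ ^ 2) * ‖b w‖) := by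
        gcongr
        exact norm_cexp_conj_mul_weighted_le hφ w
    _ = Real.exp (φ 0) * (Real.exp (a * ‖w‖) * Real.exp (L * ‖w‖ - ‖A w‖ ^ 2) * ‖b w‖) := by ring
    _ = Real.exp (φ 0) * (Real.exp ((a + L) * ‖w‖ - ‖A w‖ ^ 2) * ‖b w‖) := by
        rw [← Real.exp_add]
        ring_nf

lemma differentiable_bergmanProj (hA : Function.Injective A) (hq : Differentiable ℂ q)
    (hφ : LipschitzWith L φ) (hb : MemLp b 2 μ) : Differentiable ℂ (bergmanProj A q μ φ b) := by
  set ℓ : E → E →L[ℂ] ℂ := fun w ↦ (2 : ℂ) • (innerSL ℂ (A w)).comp A with hℓ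
  set R : E → ℂ := fun w ↦ cexp (conj (q w)) * weighted (potential A q) φ b w with hR
  have hℓ_cont : Continuous ℓ :=
    (((innerSL ℂ).continuous.comp A.continuous).clm_comp continuous_const).const_smul (2 : ℂ)
  have hR_meas : AEStronglyMeasurable R μ := by
    have := hq.continuous
    have := continuous_potential (A := A) hq.continuous
    have := hφ.continuous
    have := hb.1
    unfold R weighted
    fun_prop
  have hint (a : ℝ) : Integrable (fun w ↦ Real.exp (a * ‖ℓ w‖) * ‖R w‖) μ := by
    refine (integrable_exp_mul_norm_cexp_conj_mul_weighted hA hR_meas hφ hb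
      (|a| * (2 * ‖A‖ ^ 2))).mono' (by fun_prop) (.of_forall fun w ↦ ?_)
    rw [norm_mul, norm_norm, Real.norm_eq_abs, Real.abs_exp, mul_assoc]
    gcongr
    · exact le_abs_self a
    · rw [hℓ, norm_smul, RCLike.norm_ofNat, mul_assoc]
      gcongr
      exact norm_innerSL_map_comp_le A w
  have hproj : bergmanProj A q μ φ b = fun z ↦
      (gaussMass A μ : ℂ)⁻¹ * cexp (q z) * ∫ w, cexp (ℓ w z) * R w ∂μ := by
    funext z
    rw [bergmanProj, ← integral_const_mul]
    refine integral_congr_ae (.of_forall fun w ↦ ?_)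
    simp only [bergmanKernel, Complex.exp_add, hℓ, hR, _root_.smul_apply,
      ContinuousLinearMap.comp_apply, innerSL_apply_apply, smul_eq_mul]
    ring
  have hLaplace := differentiable_integral_cexp_mul hℓ_cont.aestronglyMeasurable hR_meas hint
  rw [hproj]
  fun_prop

lemma bergmanProj_mem_fockSpace (hA : Function.Injective A) (hq : Differentiable ℂ q)
    (hφ : LipschitzWith L φ) (hb : MemLp b 2 μ) :
    bergmanProj A q μ φ b ∈ fockSpace μ (potential A q) (-φ) := by
  have hdiff := differentiable_bergmanProj hA hq hφ hb
  have hmeas := (continuous_weighted (continuous_potential (A := A) hq.continuous)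
    hφ.neg.continuous hdiff.continuous).aestronglyMeasurable (μ := μ)
  refine ⟨hdiff, hmeas, ?_⟩
  rw [eLpNorm_lt_top_iff_lintegral_rpow_enorm_lt_top two_ne_zero ofNat_ne_top, toReal_ofNat]
  calc ∫⁻ z, ‖weighted (potential A q) (-φ) (bergmanProj A q μ φ b) z‖ₑ ^ (2 : ℝ) ∂μ
      ≤ ∫⁻ z, (∫⁻ w, ENNReal.ofReal (kernelMajorant A μ L (w - z)) * ‖b w‖ₑ ∂μ) ^ (2 : ℝ) ∂μ := by
        gcongr with z
        exact enorm_weighted_bergmanProj_le hφ z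
    _ ≤ (∫⁻ d, ENNReal.ofReal (kernelMajorant A μ L d) ∂μ) ^ (2 : ℝ) *
          ∫⁻ w, ‖b w‖ₑ ^ (2 : ℝ) ∂μ :=
        lintegral_rpow_lintegral_sub_mul_le one_le_two
          continuous_kernelMajorant.measurable.ennreal_ofReal hb.1.enorm
    _ < ∞ := by
        refine ENNReal.mul_lt_top
          (ENNReal.rpow_lt_top_of_nonneg zero_le_two (lintegral_kernelMajorant_lt_top hA).ne) ?_
        simpa only [toReal_ofNat] using
          lintegral_rpow_enorm_lt_top_of_eLpNorm_lt_top two_ne_zero ofNat_ne_top hb.2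

end Projection

section Duality

variable {E F : Type*} [NormedAddCommGroup E] [NormedSpace ℂ E] [NormedAddCommGroup F]
  [InnerProductSpace ℂ F] {A : E →L[ℂ] F} {q : E → ℂ} {φ : E → ℝ} {L : ℝ≥0} {b u : E → ℂ}
  [MeasurableSpace E] {μ : Measure E}

lemma enorm_mul_conj_bergmanKernel_mul_weighted_le (hφ : LipschitzWith L φ) (z w : E) :
    ‖u z * conj (bergmanKernel A q μ z w * weighted (potential A q) φ b w) *
        (Real.exp (-2 * potential A q z) : ℝ)‖ₑ
      ≤ ‖weighted (potential A q) φ u z‖ₑ *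
        (ENNReal.ofReal (kernelMajorant A μ L (w - z)) * ‖b w‖ₑ) := by
  rw [← inner_weighted_neg (φ := φ) u
    (fun z ↦ bergmanKernel A q μ z w * weighted (potential A q) φ b w) z, RCLike.inner_apply,
    enorm_mul, RCLike.enorm_conj]
  gcongr
  rw [weighted, mul_right_comm]
  exact enorm_weighted_bergmanKernel_mul_weighted_le hφ z w

lemma aestronglyMeasurable_mul_conj_bergmanKernel_mul_weighted [BorelSpace E]
    [SecondCountableTopology E] (hq : Continuous q) (hφ : Continuous φ)
    (hu : Continuous u) (hb : AEStronglyMeasurable b μ) :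
    AEStronglyMeasurable (Function.uncurry fun z w ↦
      u z * conj (bergmanKernel A q μ z w * weighted (potential A q) φ b w) *
        (Real.exp (-2 * potential A q z) : ℝ)) (μ.prod μ) := by
  have hΦ := continuous_potential (A := A) hq
  have hbw : AEStronglyMeasurable (weighted (potential A q) φ b) μ := hb.mul (by fun_prop)
  exact ((hu.comp continuous_fst).aestronglyMeasurable.mul
    (((continuous_bergmanKernel hq).aestronglyMeasurable.mul hbw.comp_snd).star)).mul
    (by fun_prop)

variable [FiniteDimensional ℂ E] [BorelSpace E] [μ.IsAddHaarMeasure]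

lemma integrable_mul_conj_bergmanKernel_mul_weighted (hA : Function.Injective A)
    (hq : Continuous q) (hφ : LipschitzWith L φ) (hu : u ∈ fockSpace μ (potential A q) φ)
    (hb : MemLp b 2 μ) :
    Integrable (Function.uncurry fun z w ↦
      u z * conj (bergmanKernel A q μ z w * weighted (potential A q) φ b w) *
        (Real.exp (-2 * potential A q z) : ℝ)) (μ.prod μ) := by
  have hmeas := aestronglyMeasurable_mul_conj_bergmanKernel_mul_weighted (A := A) hq
    hφ.continuous hu.1.continuous hb.1
  refine ⟨hmeas, ?_⟩
  rw [hasFiniteIntegral_iff_enorm, lintegral_prod _ hmeas.enorm]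
  calc ∫⁻ z, ∫⁻ w, ‖u z * conj (bergmanKernel A q μ z w * weighted (potential A q) φ b w) *
        (Real.exp (-2 * potential A q z) : ℝ)‖ₑ ∂μ ∂μ
      ≤ ∫⁻ z, ‖weighted (potential A q) φ u z‖ₑ *
          ∫⁻ w, ENNReal.ofReal (kernelMajorant A μ L (w - z)) * ‖b w‖ₑ ∂μ ∂μ := by
        gcongr with z
        rw [← lintegral_const_mul' _ _ enorm_ne_top]
        gcongr with w
        exact enorm_mul_conj_bergmanKernel_mul_weighted_le hφ z w
    _ ≤ (∫⁻ z, ‖weighted (potential A q) φ u z‖ₑ ^ (2 : ℝ) ∂μ) ^ (1 / 2 : ℝ) *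
          ((∫⁻ d, ENNReal.ofReal (kernelMajorant A μ L d) ∂μ) ^ (2 : ℝ) *
            ∫⁻ w, ‖b w‖ₑ ^ (2 : ℝ) ∂μ) ^ (1 / 2 : ℝ) :=
        lintegral_mul_lintegral_sub_mul_le .two_two
          continuous_kernelMajorant.measurable.ennreal_ofReal hu.2.1.enorm hb.1.enorm
    _ < ∞ := by
        have hfinite {f : E → ℂ} (hf : MemLp f 2 μ) : ∫⁻ z, ‖f z‖ₑ ^ (2 : ℝ) ∂μ < ∞ := by
          simpa only [toReal_ofNat] using
            lintegral_rpow_enorm_lt_top_of_eLpNorm_lt_top two_ne_zero ofNat_ne_top hf.2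
        have hmajorant := ENNReal.rpow_lt_top_of_nonneg zero_le_two
          (lintegral_kernelMajorant_lt_top (μ := μ) (L := L) hA).ne
        exact ENNReal.mul_lt_top
          (ENNReal.rpow_lt_top_of_nonneg one_half_pos.le (hfinite hu.2).ne)
          (ENNReal.rpow_lt_top_of_nonneg one_half_pos.le
            (ENNReal.mul_lt_top hmajorant (hfinite hb)).ne)

lemma fockPairing_bergmanProj (hA : Function.Injective A) (hq : Differentiable ℂ q)
    (hφ : LipschitzWith L φ) (hu : u ∈ fockSpace μ (potential A q) φ) (hb : MemLp b 2 μ) :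
    fockPairing μ (potential A q) u (bergmanProj A q μ φ b)
      = ∫ w, inner ℂ (b w) (weighted (potential A q) φ u w) ∂μ := by
  calc fockPairing μ (potential A q) u (bergmanProj A q μ φ b)
      = ∫ z, ∫ w, u z * conj (bergmanKernel A q μ z w * weighted (potential A q) φ b w) *
          (Real.exp (-2 * potential A q z) : ℝ) ∂μ ∂μ := by
        simp only [fockPairing, bergmanProj, ← integral_conj, ← integral_const_mul,
          ← integral_mul_const]
    _ = ∫ w, fockPairing μ (potential A q) u
          (weighted (potential A q) φ b w • (bergmanKernel A q μ · w)) ∂μ := by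
        rw [integral_integral_swap
          (integrable_mul_conj_bergmanKernel_mul_weighted hA hq.continuous hφ hu hb)]
        simp only [fockPairing, Pi.smul_apply, smul_eq_mul, mul_comm (bergmanKernel A q μ _ _)]
    _ = ∫ w, inner ℂ (b w) (weighted (potential A q) φ u w) ∂μ := by
        simp only [fockPairing_smul, fockPairing_bergmanKernel hA hq hφ hu, weighted, map_mul,
          conj_ofReal, RCLike.inner_apply, mul_comm (conj (b _)), mul_assoc, mul_left_comm]

lemma exists_fockPairing_eq (hA : Function.Injective A) (hq : Differentiable ℂ q)
    (hφ : LipschitzWith L φ) (ψ : fockSpace μ (potential A q) φ →ₗ[ℂ] ℂ)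
    (hψ : ∃ K : ℝ, ∀ u, ‖ψ u‖ ≤ K * fockNorm μ (potential A q) φ u) :
    ∃ v ∈ fockSpace μ (potential A q) (-φ), ∀ u, ψ u = fockPairing μ (potential A q) u v := by
  obtain ⟨b, hb⟩ := exists_eq_inner_map_of_norm_le (fockToLp μ (potential A q) φ) ψ
    (by simpa only [norm_fockToLp] using hψ)
  refine ⟨_, bergmanProj_mem_fockSpace hA hq hφ (Lp.memLp b), fun u ↦ ?_⟩
  rw [hb, L2.inner_def, fockPairing_bergmanProj hA hq hφ u.2 (Lp.memLp b)]
  refine integral_congr_ae ?_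
  filter_upwards [MemLp.coeFn_toLp u.2.2] with w hw
  rw [← hw]
  rfl

lemma eq_of_fockPairing_eq (hA : Function.Injective A) (hq : Differentiable ℂ q)
    (hφ : LipschitzWith L φ) {v₁ v₂ : E → ℂ} (hv₁ : v₁ ∈ fockSpace μ (potential A q) (-φ))
    (hv₂ : v₂ ∈ fockSpace μ (potential A q) (-φ))
    (h : ∀ u ∈ fockSpace μ (potential A q) φ,
      fockPairing μ (potential A q) u v₁ = fockPairing μ (potential A q) u v₂) : v₁ = v₂ := by
  funext z
  rw [← fockPairing_bergmanKernel hA hq hφ.neg hv₁ z,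
    ← fockPairing_bergmanKernel hA hq hφ.neg hv₂ z, ← conj_fockPairing,
    h _ (bergmanKernel_mem_fockSpace hA hq hφ z), conj_fockPairing]

end Duality

section QuadraticForm

lemma exists_norm_sq_eq_re_of_posDef {𝕜 E : Type*} [RCLike 𝕜] [AddCommGroup E] [Module 𝕜 E]
    [FiniteDimensional 𝕜 E] {h : E →ₗ⋆[𝕜] E →ₗ[𝕜] 𝕜} (hsymm : h.IsSymm)
    (hpos : ∀ z, z ≠ 0 → 0 < RCLike.re (h z z)) :
    ∃ A : E →ₗ[𝕜] EuclideanSpace 𝕜 (Fin (finrank 𝕜 E)), ∀ z, ‖A z‖ ^ 2 = RCLike.re (h z z) := by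
  let core : InnerProductSpace.Core 𝕜 E :=
    { inner w z := h w z
      conj_inner_symm w z := hsymm.eq z w
      re_inner_nonneg z := by
        rcases eq_or_ne z 0 with rfl | hz
        · rw [map_zero, map_zero]
        · exact (hpos z hz).le
      add_left w₁ w₂ z := by rw [map_add, LinearMap.add_apply]
      smul_left w z c := by rw [LinearMap.map_smulₛₗ₂, smul_eq_mul]
      definite z hz := by
        by_contra hne
        exact (hpos z hne).ne' (by rw [hz, map_zero]) }
  let := core.toNormedAddCommGroup
  let := InnerProductSpace.ofCore core.toCore
  exact ⟨(stdOrthonormalBasis 𝕜 E).repr.toLinearEquiv, fun z ↦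
    (congrArg (· ^ 2) ((stdOrthonormalBasis 𝕜 E).repr.norm_map z)).trans
      (norm_sq_eq_re_inner (𝕜 := 𝕜) z)⟩

variable {E G : Type*} [AddCommGroup E] [Module ℝ E] [Module ℂ E] [IsScalarTower ℝ ℂ E]
  [AddCommGroup G] [Module ℝ G] [Module ℂ G] [IsScalarTower ℝ ℂ G]

lemma map_complex_smul (T : E →ₗ[ℝ] G) (c : ℂ) (z : E) :
    T (c • z) = (c.re : ℂ) • T z + (c.im : ℂ) • T (I • z) := by
  have hc : c • z = c.re • z + c.im • I • z := by
    rw [← algebraMap_smul ℂ c.re, ← algebraMap_smul ℂ c.im, smul_smul, ← add_smul,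
      coe_algebraMap, re_add_im]
  rw [hc, map_add, map_smul, map_smul, ← algebraMap_smul ℂ c.re, ← algebraMap_smul ℂ c.im,
    coe_algebraMap]

lemma map_I_smul_complex_smul (T : E →ₗ[ℝ] G) (c : ℂ) (z : E) :
    T (I • c • z) = (c.re : ℂ) • T (I • z) - (c.im : ℂ) • T z := by
  rw [smul_comm, map_complex_smul, smul_smul, I_mul_I, neg_one_smul, map_neg, smul_neg,
    sub_eq_add_neg]

/-- The `ℂ`-linear part of a real-linear map between complex vector spaces. -/
def linearPart (T : E →ₗ[ℝ] G) : E →ₗ[ℂ] G where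
  toFun z := (2 : ℂ)⁻¹ • (T z - I • T (I • z))
  map_add' z w := by
    simp only [smul_add, map_add]
    module
  map_smul' c z := by
    rw [map_complex_smul, map_I_smul_complex_smul, RingHom.id_apply]
    match_scalars
    · linear_combination 2⁻¹ * re_add_im c
    · linear_combination -2⁻¹ * I * re_add_im c + (2⁻¹ * c.im : ℂ) * I_sq

/-- The antilinear part of a real-linear map between complex vector spaces. -/
def antilinearPart (T : E →ₗ[ℝ] G) : E →ₗ⋆[ℂ] G where
  toFun z := (2 : ℂ)⁻¹ • (T z + I • T (I • z))
  map_add' z w := by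
    simp only [smul_add, map_add]
    module
  map_smul' c z := by
    have hconj : (c.re - c.im * I : ℂ) = conj c := by
      rw [← conj_re, ← neg_neg c.im, ← conj_im, ofReal_neg, neg_mul, sub_neg_eq_add, re_add_im]
    rw [map_complex_smul, map_I_smul_complex_smul]
    match_scalars
    · linear_combination 2⁻¹ * hconj
    · linear_combination 2⁻¹ * I * hconj + (2⁻¹ * c.im : ℂ) * I_sq

lemma linearPart_add_antilinearPart (T : E →ₗ[ℝ] G) (z : E) :
    linearPart T z + antilinearPart T z = T z := by
  simp only [linearPart, antilinearPart, LinearMap.coe_mk, AddHom.coe_mk]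
  module

variable {S : E →ₗ[ℝ] E →ₗ[ℝ] ℝ}

/-- The complexification, in the second argument, of a real bilinear form. -/
def complexifyRight (S : E →ₗ[ℝ] E →ₗ[ℝ] ℝ) : E →ₗ[ℝ] E →ₗ[ℂ] ℂ :=
  (Dual.extendRCLikeₗ (𝕜 := ℂ) (F := E)).toLinearMap ∘ₗ S

lemma complexifyRight_apply (w z : E) : complexifyRight S w z = S w z - I * S w (I • z) := rfl

/-- The Levi form `w ↦ ∑ ∂²Φ/∂z_j∂z̄_k w̄_k z_j` of the quadratic form `Φ z = S z z`, for a
symmetric real bilinear form `S`, as a Hermitian form. -/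
def leviForm (S : E →ₗ[ℝ] E →ₗ[ℝ] ℝ) : E →ₗ⋆[ℂ] E →ₗ[ℂ] ℂ :=
  antilinearPart (complexifyRight S)

lemma leviForm_apply (w z : E) :
    leviForm S w z = 2⁻¹ * ((S w z + S (I • w) (I • z) : ℝ) +
      I * (S (I • w) z - S w (I • z) : ℝ)) := by
  simp only [leviForm, antilinearPart, LinearMap.coe_mk, AddHom.coe_mk, LinearMap.add_apply,
    LinearMap.smul_apply, complexifyRight_apply, smul_eq_mul]
  push_cast
  linear_combination (-2⁻¹ * S (I • w) (I • z) : ℂ) * I_sq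

lemma isSymm_leviForm (hS : S.IsSymm) : (leviForm S).IsSymm := by
  refine ⟨fun w z ↦ ?_⟩
  have hswap (w z : E) : S w z = S z w := hS.eq w z
  rw [leviForm_apply, leviForm_apply, hswap z w, hswap (I • z) (I • w), hswap (I • z) w,
    hswap z (I • w)]
  simp only [map_mul, map_add, map_inv₀, conj_ofNat, conj_ofReal, conj_I]
  push_cast
  ring

lemma leviForm_self_re (z : E) : (leviForm S z z).re = (S z z + S (I • z) (I • z)) / 2 := by
  rw [leviForm_apply, ← Complex.ofReal_ofNat, ← ofReal_inv, re_ofReal_mul, add_re, ofReal_re,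
    I_mul_re, ofReal_im, neg_zero, add_zero, inv_mul_eq_div]

lemma re_linearPart_add_leviForm (z : E) :
    (linearPart (complexifyRight S) z z).re + (leviForm S z z).re = S z z := by
  rw [leviForm, ← add_re, ← LinearMap.add_apply, linearPart_add_antilinearPart]
  exact Dual.re_extendRCLike_apply (𝕜 := ℂ) (S z) z

lemma exists_apply_self_eq_potential {E : Type*} [NormedAddCommGroup E] [NormedSpace ℂ E]
    [FiniteDimensional ℂ E] {S : E →ₗ[ℝ] E →ₗ[ℝ] ℝ} (hS : S.IsSymm)
    (hpos : ∀ z, z ≠ 0 → 0 < S z z + S (I • z) (I • z)) :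
    ∃ (A : E →L[ℂ] EuclideanSpace ℂ (Fin (finrank ℂ E))) (q : E → ℂ), Function.Injective A ∧
      Differentiable ℂ q ∧ ∀ z, S z z = potential A q z := by
  have hLevi (z : E) (hz : z ≠ 0) : 0 < (leviForm S z z).re := by
    rw [leviForm_self_re]
    linarith [hpos z hz]
  obtain ⟨A, hA⟩ := exists_norm_sq_eq_re_of_posDef (isSymm_leviForm hS) hLevi
  let G := LinearMap.toContinuousLinearMap
    (LinearMap.toContinuousLinearMap.toLinearMap ∘ₗ linearPart (complexifyRight S))
  refine ⟨LinearMap.toContinuousLinearMap A, fun z ↦ G z z, ?_, by fun_prop, fun z ↦ ?_⟩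
  · refine (injective_iff_map_eq_zero A).2 fun z hz ↦ ?_
    by_contra hne
    exact (hLevi z hne).ne' (by rw [← RCLike.re_to_complex, ← hA, hz, norm_zero, sq, zero_mul])
  · rw [← re_linearPart_add_leviForm, add_comm, ← RCLike.re_to_complex, ← hA]
    rfl

lemma IsSPSH.exists_eq_potential {n : ℕ} {Φ : (Fin n → ℂ) → ℝ} (hΦ : IsSPSH Φ) :
    ∃ (A : (Fin n → ℂ) →L[ℂ] EuclideanSpace ℂ (Fin (finrank ℂ (Fin n → ℂ))))
      (q : (Fin n → ℂ) → ℂ), Function.Injective A ∧ Differentiable ℂ q ∧ Φ = potential A q := by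
  obtain ⟨⟨B, hB⟩, hpos⟩ := hΦ
  set Q := LinearMap.BilinMap.toQuadraticMap B with hQ
  have hΦQ (z : Fin n → ℂ) : Φ z = QuadraticMap.associated (R := ℝ) Q z z := by
    rw [hB, QuadraticMap.associated_eq_self_apply, hQ, LinearMap.BilinMap.toQuadraticMap_apply]
  simp only [hΦQ] at hpos
  obtain ⟨A, q, hA, hq, hΦ⟩ :=
    exists_apply_self_eq_potential (QuadraticForm.associated_isSymm ℝ Q) hpos
  exact ⟨A, q, hA, hq, funext fun z ↦ (hΦQ z).trans (hΦ z)⟩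

end QuadraticForm

section Bracket

lemma lipschitzOnWith_log_Ici_one : LipschitzOnWith 1 Real.log (Set.Ici 1) := by
  refine LipschitzOnWith.of_le_add fun x (hx : 1 ≤ x) y (hy : 1 ≤ y) ↦ ?_
  have hx₀ : 0 < x := by linarith
  have hy₀ : 0 < y := by linarith
  rw [← sub_le_iff_le_add', ← Real.log_div hx₀.ne' hy₀.ne']
  calc Real.log (x / y) ≤ x / y - 1 := Real.log_le_sub_one_of_pos (by positivity)
    _ = (x - y) / y := by rw [sub_div, div_self hy₀.ne']
    _ ≤ |x - y| / y := by gcongr; exact le_abs_self _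
    _ ≤ dist x y := div_le_self (abs_nonneg _) hy

variable {n : ℕ}

lemma eSq_eq_norm_sq (z : Fin n → ℂ) :
    eSq z = ‖(WithLp.toLp 2 z : EuclideanSpace ℂ (Fin n))‖ ^ 2 := by
  simp only [eSq, EuclideanSpace.norm_sq_eq, normSq_eq_norm_sq]

lemma one_le_jb (z : Fin n → ℂ) : 1 ≤ jb z := by
  rw [jb, Real.one_le_sqrt, eSq_eq_norm_sq, le_add_iff_nonneg_right]
  positivity

lemma jb_eq_norm (z : Fin n → ℂ) :
    jb z = ‖WithLp.toLp 2 ((1 : ℝ), (WithLp.toLp 2 z : EuclideanSpace ℂ (Fin n)))‖ := by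
  rw [WithLp.prod_norm_eq_of_L2, jb, eSq_eq_norm_sq, WithLp.toLp_fst, WithLp.toLp_snd, norm_one,
    one_pow]

lemma exists_lipschitzWith_smul_log_jb (s : ℝ) :
    ∃ L, LipschitzWith L (s • (Real.log ∘ jb (n := n))) := by
  obtain ⟨K, hjb⟩ : ∃ K, LipschitzWith K (jb (n := n)) := by
    rw [show jb (n := n) = _ from funext jb_eq_norm]
    exact ⟨_, lipschitzWith_one_norm.comp ((WithLp.prod_lipschitzWith_toLp 2 ℝ
      (EuclideanSpace ℂ (Fin n))).comp ((LipschitzWith.const 1).prodMk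
        (PiLp.lipschitzWith_toLp 2 fun _ : Fin n ↦ ℂ)))⟩
  exact ⟨_, (lipschitzWith_smul s).comp (lipschitzOnWith_univ.1
    (lipschitzOnWith_log_Ici_one.comp hjb.lipschitzOnWith fun z _ ↦ one_le_jb z))⟩

variable {Φ : (Fin n → ℂ) → ℝ} {s : ℝ} {u : (Fin n → ℂ) → ℂ}

lemma jb_rpow_mul_exp (z : Fin n → ℂ) :
    jb z ^ (2 * s) * Real.exp (-2 * Φ z)
      = Real.exp ((s • (Real.log ∘ jb)) z - Φ z) ^ 2 := by
  rw [Real.rpow_def_of_pos (zero_lt_one.trans_le (one_le_jb z)), ← Real.exp_add, ← Real.exp_nat_mul]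
  congr 1
  simp only [Pi.smul_apply, Function.comp_apply, smul_eq_mul]
  push_cast
  ring

lemma hnorm_eq_eLpNorm_sq :
    hnorm Φ s u = eLpNorm (weighted Φ (s • (Real.log ∘ jb)) u) 2 volume ^ 2 := by
  have henorm (z : Fin n → ℂ) : ‖weighted Φ (s • (Real.log ∘ jb)) u z‖ₑ ^ 2
      = (‖u z‖₊ : ℝ≥0∞) ^ 2 * ENNReal.ofReal (jb z ^ (2 * s) * Real.exp (-2 * Φ z)) := by
    rw [jb_rpow_mul_exp, ← ofReal_norm, norm_weighted, ENNReal.ofReal_mul (norm_nonneg _), mul_pow,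
      ofReal_norm, ENNReal.ofReal_pow (Real.exp_pos _).le]
    rfl
  simpa only [hnorm, NNReal.coe_ofNat, ENNReal.rpow_ofNat, coe_ofNat, henorm] using
    (eLpNorm_nnreal_pow_eq_lintegral (μ := volume) (f := weighted Φ (s • (Real.log ∘ jb)) u)
      two_ne_zero).symm

lemma sqrt_toReal_hnorm :
    Real.sqrt (hnorm Φ s u).toReal = fockNorm volume Φ (s • (Real.log ∘ jb)) u := by
  rw [hnorm_eq_eLpNorm_sq, toReal_pow, Real.sqrt_sq toReal_nonneg, fockNorm]

lemma memH_iff_mem_fockSpace (hΦ : Continuous Φ) :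
    memH Φ s u ↔ u ∈ fockSpace volume Φ (s • (Real.log ∘ jb)) := by
  obtain ⟨L, hL⟩ := exists_lipschitzWith_smul_log_jb (n := n) s
  refine and_congr_right fun hu ↦ ?_
  rw [hnorm_eq_eLpNorm_sq, ENNReal.pow_lt_top_iff, MemLp, or_iff_left two_ne_zero]
  exact (and_iff_right
    (continuous_weighted hΦ hL.continuous hu.continuous).aestronglyMeasurable).symm

lemma pairΦ_eq_fockPairing : pairΦ Φ = fockPairing volume Φ := rfl

end Bracket

theorem stmt_6_general {E F : Type*} [NormedAddCommGroup E] [NormedSpace ℂ E]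
    [FiniteDimensional ℂ E] [MeasurableSpace E] [BorelSpace E] {μ : Measure E} [μ.IsAddHaarMeasure]
    [NormedAddCommGroup F] [InnerProductSpace ℂ F] {A : E →L[ℂ] F} (hA : Function.Injective A)
    {q : E → ℂ} (hq : Differentiable ℂ q) {φ : E → ℝ} {L : ℝ≥0} (hφ : LipschitzWith L φ) :
    let Φ := potential A q
    (∀ v ∈ fockSpace μ Φ (-φ), ∀ u ∈ fockSpace μ Φ φ,
      ‖fockPairing μ Φ u v‖ ≤ fockNorm μ Φ (-φ) v * fockNorm μ Φ φ u) ∧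
    (∀ v₁ v₂ u, v₁ ∈ fockSpace μ Φ (-φ) → v₂ ∈ fockSpace μ Φ (-φ) → u ∈ fockSpace μ Φ φ →
      fockPairing μ Φ u (v₁ + v₂) = fockPairing μ Φ u v₁ + fockPairing μ Φ u v₂) ∧
    (∀ (c : ℂ) (v u : E → ℂ), v ∈ fockSpace μ Φ (-φ) → u ∈ fockSpace μ Φ φ →
      fockPairing μ Φ u (c • v) = conj c * fockPairing μ Φ u v) ∧
    (∀ v₁ v₂, v₁ ∈ fockSpace μ Φ (-φ) → v₂ ∈ fockSpace μ Φ (-φ) →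
      (∀ u ∈ fockSpace μ Φ φ, fockPairing μ Φ u v₁ = fockPairing μ Φ u v₂) → v₁ = v₂) ∧
    (∀ ψ : (E → ℂ) → ℂ,
      (∀ u₁ u₂, u₁ ∈ fockSpace μ Φ φ → u₂ ∈ fockSpace μ Φ φ → ψ (u₁ + u₂) = ψ u₁ + ψ u₂) →
      (∀ (c : ℂ) (u : E → ℂ), u ∈ fockSpace μ Φ φ → ψ (c • u) = c * ψ u) →
      (∃ K : ℝ, ∀ u ∈ fockSpace μ Φ φ, ‖ψ u‖ ≤ K * fockNorm μ Φ φ u) →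
      ∃ v, v ∈ fockSpace μ Φ (-φ) ∧ ∀ u ∈ fockSpace μ Φ φ, ψ u = fockPairing μ Φ u v) := by
  refine ⟨fun v hv u hu ↦ norm_fockPairing_le hu hv,
    fun v₁ v₂ u hv₁ hv₂ hu ↦ fockPairing_add hu hv₁ hv₂,
    fun c v u _ _ ↦ fockPairing_smul c u v,
    fun v₁ v₂ hv₁ hv₂ ↦ eq_of_fockPairing_eq hA hq hφ hv₁ hv₂,
    fun ψ hadd hsmul ⟨K, hK⟩ ↦ ?_⟩
  let ψ' : fockSpace μ (potential A q) φ →ₗ[ℂ] ℂ :=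
    { toFun u := ψ u
      map_add' u₁ u₂ := hadd u₁ u₂ u₁.2 u₂.2
      map_smul' c u := hsmul c u u.2 }
  obtain ⟨v, hv, hψv⟩ := exists_fockPairing_eq hA hq hφ ψ' ⟨K, fun u ↦ hK u u.2⟩
  exact ⟨v, hv, fun u hu ↦ hψv ⟨u, hu⟩⟩

/-- For a strictly plurisubharmonic quadratic form `Φ` on `ℂⁿ` and `s ∈ ℝ`:
for every `v ∈ H^{-s}_Φ`, the pairing `ψ_v(u) = ∫ u conj(v) e^{-2Φ}` is a bounded
(conjugate-)linear functional on `H^s_Φ` with `|ψ_v(u)| ≤ ‖v‖_{-s}‖u‖_s`; the map `v ↦ ψ_v`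
is conjugate-linear, injective, and onto the continuous dual of `H^s_Φ`. -/
theorem stmt_6 (n : ℕ) (hn : 1 ≤ n) (Φ : (Fin n → ℂ) → ℝ) (hΦ : IsSPSH Φ) (s : ℝ) :
    -- norm bound `‖ψ_v‖ ≤ ‖v‖_{-s}`
    (∀ v : (Fin n → ℂ) → ℂ, memH Φ (-s) v → ∀ u : (Fin n → ℂ) → ℂ, memH Φ s u →
        ‖pairΦ Φ u v‖ ≤ Real.sqrt (hnorm Φ (-s) v).toReal * Real.sqrt (hnorm Φ s u).toReal) ∧
    -- conjugate-linearity of `v ↦ ψ_v`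
    (∀ v₁ v₂ u : (Fin n → ℂ) → ℂ, memH Φ (-s) v₁ → memH Φ (-s) v₂ → memH Φ s u →
        pairΦ Φ u (v₁ + v₂) = pairΦ Φ u v₁ + pairΦ Φ u v₂) ∧
    (∀ (c : ℂ) (v u : (Fin n → ℂ) → ℂ), memH Φ (-s) v → memH Φ s u →
        pairΦ Φ u (c • v) = (starRingEnd ℂ) c * pairΦ Φ u v) ∧
    -- injectivity
    (∀ v₁ v₂ : (Fin n → ℂ) → ℂ, memH Φ (-s) v₁ → memH Φ (-s) v₂ →
        (∀ u : (Fin n → ℂ) → ℂ, memH Φ s u → pairΦ Φ u v₁ = pairΦ Φ u v₂) → v₁ = v₂) ∧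
    -- surjectivity onto the continuous dual of `H^s_Φ`
    (∀ ψ : ((Fin n → ℂ) → ℂ) → ℂ,
        (∀ u₁ u₂ : (Fin n → ℂ) → ℂ, memH Φ s u₁ → memH Φ s u₂ →
            ψ (u₁ + u₂) = ψ u₁ + ψ u₂) →
        (∀ (c : ℂ) (u : (Fin n → ℂ) → ℂ), memH Φ s u → ψ (c • u) = c * ψ u) →
        (∃ K : ℝ, ∀ u : (Fin n → ℂ) → ℂ, memH Φ s u →
            ‖ψ u‖ ≤ K * Real.sqrt (hnorm Φ s u).toReal) →
        ∃ v : (Fin n → ℂ) → ℂ, memH Φ (-s) v ∧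
          ∀ u : (Fin n → ℂ) → ℂ, memH Φ s u → ψ u = pairΦ Φ u v) := by
  obtain ⟨A, q, hA, hq, rfl⟩ := hΦ.exists_eq_potential
  obtain ⟨L, hL⟩ := exists_lipschitzWith_smul_log_jb (n := n) s
  simpa only [memH_iff_mem_fockSpace (continuous_potential hq.continuous), sqrt_toReal_hnorm,
    pairΦ_eq_fockPairing, neg_smul] using stmt_6_general (μ := volume) hA hq hL
end
end

section
/- Let Φ₁, Φ₂ : ℂⁿ → ℝ be strictly plurisubharmonic quadratic forms, let κ : ℂⁿ → ℂⁿ be an ℝ-linear isomorphism, let â ∈ ℂ, and let Ψ be a holomorphic quadratic form on ℂ^{2n} = ℂⁿ_z × ℂⁿ_θ such that for some c > 0, 2 Re Ψ(z, w̄) − Φ₁(z) − Φ₂(w) ≤ −c|z − κ(w)|² for all z, w ∈ ℂⁿ. Then for every s ∈ ℝ there exists M > 0 such that for every u ∈ H^s_{Φ₂}(ℂⁿ), the function G u(z) = â ∫_{ℂⁿ} e^{2Ψ(z,w̄)} u(w) e^{-2Φ₂(w)} dL(w) is entire on ℂⁿ and satisfies ∫_{ℂⁿ} |Gu(z)|²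 ⟨z⟩^{2s} e^{-2Φ₁(z)} dL(z) ≤ M² ∫_{ℂⁿ} |u(w)|² ⟨w⟩^{2s} e^{-2Φ₂(w)} dL(w). -/
open Matrix MeasureTheory ENNReal

noncomputable section

/-!
Conjugating the operator by the weights `⟨z⟩^s e^{-Φ(z)}` turns the hypothesis on the phase into the
bound `C ⟨z⟩^s ⟨w⟩^{-s} e^{-c|z - κ(w)|²}` for its kernel. As `κ` is bi-Lipschitz, the brackets of
`z` and `w` differ at most by a factor `B (1 + |z - κ(w)|)` (Peetre's inequality), and half of the
Gaussian absorbs any power of this factor. What remains is a Gaussian in `z - κ(w)`: its two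
marginals are uniformly bounded, so Schur's test gives the norm estimate. For `z` near a fixed `z₀`
the same Gaussian, recentred at `z₀`, dominates the integrand, and its product with the square
integrable `|u| ⟨w⟩^s e^{-Φ₂}` is integrable; this makes the integral holomorphic.
-/

section

open Filter
open scoped NNReal Topology

lemma one_add_rpow_le_exp_mul_exp_sq {t ε : ℝ} (ht : 0 ≤ t) (hε : 0 < ε) (r : ℝ) :
    (1 + t) ^ r ≤ Real.exp (r ^ 2 / (4 * ε)) * Real.exp (ε * t ^ 2) := by
  have young : t * |r| ≤ r ^ 2 / (4 * ε) + ε * t ^ 2 := by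
    have h_sq : r ^ 2 / (4 * ε) + ε * t ^ 2 - t * |r| = (|r| - 2 * ε * t) ^ 2 / (4 * ε) := by
      rw [← sq_abs r]
      field_simp
      ring
    have : 0 ≤ (|r| - 2 * ε * t) ^ 2 / (4 * ε) := by positivity
    linarith
  calc (1 + t) ^ r ≤ (1 + t) ^ |r| :=
        Real.rpow_le_rpow_of_exponent_le (by linarith) (le_abs_self r)
    _ ≤ Real.exp t ^ |r| := by
        gcongr
        linarith [Real.add_one_le_exp t]
    _ = Real.exp (t * |r|) := (Real.exp_mul t |r|).symm
    _ ≤ Real.exp (r ^ 2 / (4 * ε)) * Real.exp (ε * t ^ 2) := by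
        rw [← Real.exp_add]
        gcongr

lemma rpow_le_rpow_abs_mul_rpow {a b A : ℝ} (ha : 0 < a) (hb : 0 < b)
    (hab : a ≤ A * b) (hba : b ≤ A * a) (s : ℝ) : a ^ s ≤ A ^ |s| * b ^ s := by
  have hA : 0 < A := pos_of_mul_pos_left (ha.trans_le hab) hb.le
  rcases le_total 0 s with hs | hs
  · rw [abs_of_nonneg hs, ← Real.mul_rpow hA.le hb.le]
    exact Real.rpow_le_rpow ha.le hab hs
  · have h := Real.rpow_le_rpow_of_nonpos hb hba hs
    rw [Real.mul_rpow hA.le ha.le] at h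
    rwa [abs_of_nonpos hs, Real.rpow_neg hA.le, ← div_eq_inv_mul, le_div_iff₀' (by positivity)]

lemma integrable_exp_neg_mul_norm_sq {E : Type*} [NormedAddCommGroup E] [NormedSpace ℝ E]
    [FiniteDimensional ℝ E] [MeasurableSpace E] [BorelSpace E] (μ : Measure E)
    [μ.IsAddHaarMeasure] {b : ℝ} (hb : 0 < b) :
    Integrable (fun x : E => Real.exp (-b * ‖x‖ ^ 2)) μ := by
  set r : ℝ := Module.finrank ℝ E + 1
  have decay (x : E) : Real.exp (-b * ‖x‖ ^ 2) ≤
      Real.exp (r ^ 2 / (4 * b)) * (1 + ‖x‖) ^ (-r) := by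
    rw [neg_mul, Real.exp_neg, Real.rpow_neg (by positivity), ← div_eq_mul_inv,
      le_div_iff₀ (by positivity), inv_mul_le_iff₀ (by positivity), mul_comm]
    exact one_add_rpow_le_exp_mul_exp_sq (norm_nonneg x) hb r
  refine ((integrable_one_add_norm (μ := μ) (r := r) (lt_add_one _)).const_mul
    (Real.exp (r ^ 2 / (4 * b)))).mono' (by fun_prop) (.of_forall fun x => ?_)
  rw [Real.norm_of_nonneg (by positivity)]
  exact decay x

lemma exists_forall_norm_sub_le_add_one {E F : Type*} [SeminormedAddCommGroup E] [Nonempty F]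
    (κ : F → E) (z : E) : ∃ w₀, ∀ w, ‖z - κ w₀‖ ≤ ‖z - κ w‖ + 1 := by
  obtain ⟨w₀, hw₀⟩ := exists_lt_of_ciInf_lt (lt_add_one (⨅ w, ‖z - κ w‖))
  have bdd : BddBelow (Set.range fun w => ‖z - κ w‖) :=
    ⟨0, Set.forall_mem_range.2 fun w => norm_nonneg _⟩
  exact ⟨w₀, fun w => hw₀.le.trans (by gcongr; exact ciInf_le bdd w)⟩

lemma exists_lintegral_exp_neg_mul_norm_sub_sq_le {E F : Type*} [SeminormedAddCommGroup E]
    [NormedAddCommGroup F] [NormedSpace ℝ F] [FiniteDimensional ℝ F] [MeasurableSpace F]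
    [BorelSpace F] (ν : Measure F) [ν.IsAddHaarMeasure] {κ : F → E} {K : ℝ≥0}
    (hκ : AntilipschitzWith K κ) {b : ℝ} (hb : 0 < b) :
    ∃ A : ℝ≥0, ∀ z, ∫⁻ w, ENNReal.ofReal (Real.exp (-b * ‖z - κ w‖ ^ 2)) ∂ν ≤ A := by
  set δ : ℝ := b / (8 * (K + 1) ^ 2)
  have hδ : 0 < δ := by positivity
  have int_lt_top : ∫⁻ w : F, ENNReal.ofReal (Real.exp (b / 4) * Real.exp (-δ * ‖w‖ ^ 2)) ∂ν < ⊤ :=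
    ((integrable_exp_neg_mul_norm_sq ν hδ).const_mul _).lintegral_lt_top
  refine ⟨_, fun z => le_of_le_of_eq ?_ (ENNReal.coe_toNNReal int_lt_top.ne).symm⟩
  -- Recentred at `w₀`, the Gaussian in `z - κ w` is dominated by one in `w - w₀`, for every `z`.
  obtain ⟨w₀, hw₀⟩ := exists_forall_norm_sub_le_add_one κ z
  rw [← lintegral_sub_left_eq_self (fun w => ENNReal.ofReal (Real.exp (b / 4) * _)) w₀]
  refine lintegral_mono fun w => ENNReal.ofReal_le_ofReal ?_
  have anti : ‖w₀ - w‖ ≤ (K + 1) * (2 * ‖z - κ w‖ + 1) :=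
    calc ‖w₀ - w‖ ≤ K * ‖κ w₀ - κ w‖ := by simpa only [dist_eq_norm] using hκ.le_mul_dist w₀ w
      _ ≤ (K + 1) * (2 * ‖z - κ w‖ + 1) := by
        gcongr
        · exact le_add_of_nonneg_right zero_le_one
        · linarith [norm_sub_le_norm_sub_add_norm_sub (κ w₀) z (κ w), norm_sub_rev z (κ w₀), hw₀ w]
  have : δ * ‖w₀ - w‖ ^ 2 ≤ b * ‖z - κ w‖ ^ 2 + b / 4 :=
    calc δ * ‖w₀ - w‖ ^ 2 ≤ δ * ((K + 1) * (2 * ‖z - κ w‖ + 1)) ^ 2 := by gcongr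
      _ = b / 8 * (2 * ‖z - κ w‖ + 1) ^ 2 := by simp only [δ]; field_simp
      _ ≤ b / 8 * (2 * ((2 * ‖z - κ w‖) ^ 2 + 1 ^ 2)) := by gcongr; exact add_sq_le
      _ = b * ‖z - κ w‖ ^ 2 + b / 4 := by ring
  rw [← Real.exp_add, Real.exp_le_exp]
  linarith

section Schur

variable {α β : Type*} [MeasurableSpace α] [MeasurableSpace β] {μ : Measure α} {ν : Measure β}
  {p : ℝ}

lemma lintegral_mul_rpow_le_lintegral_rpow_mul (hp : 1 ≤ p) {k f : α → ℝ≥0∞}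
    (hk : AEMeasurable k μ) (hf : AEMeasurable f μ) :
    (∫⁻ x, k x * f x ∂μ) ^ p ≤ (∫⁻ x, k x ∂μ) ^ (p - 1) * ∫⁻ x, k x * f x ^ p ∂μ := by
  obtain rfl | hp' := hp.eq_or_lt
  · simp
  have hpq : p.HolderConjugate p.conjExponent := .conjExponent hp'
  have hf' : AEMeasurable f (μ.withDensity k) := hf.mono_ac (withDensity_absolutelyContinuous μ k)
  have hölder := ENNReal.lintegral_mul_le_Lp_mul_Lq (μ.withDensity k) hpq hf'
    (aemeasurable_const (b := 1))
  simp only [Pi.mul_apply, mul_one, ENNReal.one_rpow, lintegral_one,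
    withDensity_apply _ .univ, Measure.restrict_univ] at hölder
  rw [lintegral_withDensity_eq_lintegral_mul₀ hk hf,
    lintegral_withDensity_eq_lintegral_mul₀ hk (hf.pow_const p)] at hölder
  calc (∫⁻ x, k x * f x ∂μ) ^ p
      ≤ ((∫⁻ x, k x * f x ^ p ∂μ) ^ (1 / p) * (∫⁻ x, k x ∂μ) ^ (1 / p.conjExponent)) ^ p := by
        gcongr
        exact hölder
    _ = (∫⁻ x, k x ∂μ) ^ (p - 1) * ∫⁻ x, k x * f x ^ p ∂μ := by
        rw [ENNReal.mul_rpow_of_nonneg _ _ hpq.nonneg, ← ENNReal.rpow_mul, ← ENNReal.rpow_mul,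
          one_div_mul_cancel hpq.ne_zero, ENNReal.rpow_one, one_div_mul_eq_div,
          hpq.div_conj_eq_sub_one, mul_comm]

theorem lintegral_rpow_lintegral_mul_le_of_schur [SFinite μ] [SFinite ν] (hp : 1 ≤ p)
    {k : α → β → ℝ≥0∞} (hk : Measurable k.uncurry) {A B : ℝ≥0∞}
    (hA : ∀ᵐ x ∂μ, ∫⁻ y, k x y ∂ν ≤ A) (hB : ∀ᵐ y ∂ν, ∫⁻ x, k x y ∂μ ≤ B)
    {f : β → ℝ≥0∞} (hf : AEMeasurable f ν) :
    ∫⁻ x, (∫⁻ y, k x y * f y ∂ν) ^ p ∂μ ≤ A ^ (p - 1) * B * ∫⁻ y, f y ^ p ∂ν := by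
  have hkf : AEMeasurable (fun q : α × β => k q.1 q.2 * f q.2 ^ p) (μ.prod ν) :=
    hk.aemeasurable.mul (hf.comp_snd.pow_const p)
  calc ∫⁻ x, (∫⁻ y, k x y * f y ∂ν) ^ p ∂μ
      ≤ ∫⁻ x, A ^ (p - 1) * ∫⁻ y, k x y * f y ^ p ∂ν ∂μ := by
        refine lintegral_mono_ae (hA.mono fun x hx => ?_)
        refine (lintegral_mul_rpow_le_lintegral_rpow_mul hp
          hk.of_uncurry_left.aemeasurable hf).trans ?_
        gcongr
    _ = A ^ (p - 1) * ∫⁻ x, ∫⁻ y, k x y * f y ^ p ∂ν ∂μ :=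
        lintegral_const_mul'' _ hkf.lintegral_prod_right'
    _ = A ^ (p - 1) * ∫⁻ y, (∫⁻ x, k x y ∂μ) * f y ^ p ∂ν := by
        rw [lintegral_lintegral_swap hkf]
        congr! 3 with y
        exact lintegral_mul_const _ hk.of_uncurry_right
    _ ≤ A ^ (p - 1) * ∫⁻ y, B * f y ^ p ∂ν := by
        gcongr A ^ (p - 1) * ?_
        refine lintegral_mono_ae (hB.mono fun y hy => ?_)
        gcongr
    _ = A ^ (p - 1) * B * ∫⁻ y, f y ^ p ∂ν := by
        rw [lintegral_const_mul'' _ (hf.pow_const p), mul_assoc]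

end Schur

section Holomorphic

variable {α E G : Type*} [MeasurableSpace α] {μ : Measure α} [NormedAddCommGroup E]
  [NormedAddCommGroup G]

lemma aestronglyMeasurable_continuousLinearMap_of_apply {𝕜 : Type*}
    [NontriviallyNormedField 𝕜] [CompleteSpace 𝕜] [NormedSpace 𝕜 E] [NormedSpace 𝕜 G]
    [FiniteDimensional 𝕜 E] {L : α → E →L[𝕜] G}
    (hL : ∀ v, AEStronglyMeasurable (fun a => L a v) μ) :
    AEStronglyMeasurable L μ := by
  let b := Module.finBasis 𝕜 E
  have expand (a : α) : L a = ∑ i, (b.coord i).toContinuousLinearMap.smulRight (L a (b i)) := by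
    ext v
    conv_lhs => rw [← b.sum_repr v]
    simp [-Module.Basis.sum_repr]
  refine (Finset.aestronglyMeasurable_fun_sum Finset.univ fun i _ => ?_).congr
    (.of_forall fun a => (expand a).symm)
  exact ((ContinuousLinearMap.smulRightL 𝕜 E G
    (b.coord i).toContinuousLinearMap).continuous).comp_aestronglyMeasurable (hL (b i))

lemma aestronglyMeasurable_hasFDerivAt_apply {𝕜 : Type*} [RCLike 𝕜] [NormedSpace 𝕜 E]
    [NormedSpace 𝕜 G] {f : E → α → G} {f' : α → E →L[𝕜] G} {z₀ : E}
    (hf : ∀ᶠ z in 𝓝 z₀, AEStronglyMeasurable (f z) μ)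
    (hf' : ∀ᵐ a ∂μ, HasFDerivAt (f · a) (f' a) z₀) (v : E) :
    AEStronglyMeasurable (fun a => f' a v) μ := by
  have hc : Tendsto (fun m : ℕ => ‖(m : 𝕜)‖) atTop atTop := by
    simpa using tendsto_natCast_atTop_atTop
  have hstep : Tendsto (fun m : ℕ => z₀ + (m : 𝕜)⁻¹ • v) atTop (𝓝 z₀) := by
    simpa using tendsto_const_nhds.add
      ((tendsto_inv₀_cobounded.comp (tendsto_norm_atTop_iff_cobounded.1 hc)).smul_const v)
  obtain ⟨N, hN⟩ := eventually_atTop.1 (hstep.eventually hf)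
  refine aestronglyMeasurable_of_tendsto_ae atTop (fun m => ?_)
    (hf'.mono fun a ha => (ha.lim v hc).comp (tendsto_add_atTop_nat N))
  exact ((hN (m + N) (Nat.le_add_left N m)).sub hf.self_of_nhds).const_smul _

variable [NormedSpace ℂ E] [NormedSpace ℂ G]

theorem differentiableAt_integral_of_dominated [FiniteDimensional ℂ E] {f : E → α → G}
    {bound : α → ℝ} {z₀ : E} {s : Set E} (hs : s ∈ 𝓝 z₀)
    (hf_meas : ∀ z ∈ s, AEStronglyMeasurable (f z) μ)
    (hf_diff : ∀ᵐ a ∂μ, DifferentiableOn ℂ (f · a) s)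
    (hf_bound : ∀ᵐ a ∂μ, ∀ z ∈ s, ‖f z a‖ ≤ bound a) (h_bound : Integrable bound μ) :
    DifferentiableAt ℂ (fun z => ∫ a, f z a ∂μ) z₀ := by
  obtain ⟨R, hR, hball⟩ := Metric.mem_nhds_iff.1 hs
  have hasFDeriv : ∀ᵐ a ∂μ, HasFDerivAt (f · a) (fderiv ℂ (f · a) z₀) z₀ :=
    hf_diff.mono fun a ha => (ha.differentiableAt hs).hasFDerivAt
  -- By the Schwarz lemma the bound on the values is already a Lipschitz bound at `z₀`.
  have lipschitz : ∀ᵐ a ∂μ, ∀ z ∈ Metric.ball z₀ R,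
      ‖f z a - f z₀ a‖ ≤ 2 * bound a / R * ‖z - z₀‖ := by
    filter_upwards [hf_diff, hf_bound] with a hda hba z hz
    simp only [← dist_eq_norm]
    refine Complex.dist_le_div_mul_dist_of_mapsTo_ball (f := (f · a)) (hda.mono hball)
      (fun y hy => ?_) hz
    rw [Metric.mem_closedBall, dist_eq_norm]
    linarith [norm_sub_le (f y a) (f z₀ a), hba y (hball hy), hba z₀ (mem_of_mem_nhds hs)]
  refine (hasFDerivAt_integral_of_dominated_loc_of_lip' (Metric.ball_mem_nhds z₀ hR)
    (fun z hz => hf_meas z (hball hz)) ?_ ?_ lipschitz ?_ hasFDeriv).2.differentiableAt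
  · exact h_bound.mono' (hf_meas z₀ (mem_of_mem_nhds hs))
      (hf_bound.mono fun a ha => ha z₀ (mem_of_mem_nhds hs))
  · exact aestronglyMeasurable_continuousLinearMap_of_apply
      (aestronglyMeasurable_hasFDerivAt_apply (eventually_of_mem hs hf_meas) hasFDeriv)
  · exact (h_bound.const_mul 2).div_const R

end Holomorphic

lemma exp_neg_mul_norm_sub_sq_le {E : Type*} [SeminormedAddCommGroup E] {b : ℝ}
    (hb : 0 ≤ b) (x y z : E) :
    Real.exp (-b * ‖x - z‖ ^ 2) ≤
      Real.exp (b * ‖x - y‖ ^ 2) * Real.exp (-(b / 2) * ‖y - z‖ ^ 2) := by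
  have triangle : ‖y - z‖ ≤ ‖x - y‖ + ‖x - z‖ := by
    simpa only [norm_sub_rev x y] using norm_sub_le_norm_sub_add_norm_sub y x z
  have : ‖y - z‖ ^ 2 ≤ 2 * (‖x - y‖ ^ 2 + ‖x - z‖ ^ 2) :=
    (pow_le_pow_left₀ (norm_nonneg _) triangle 2).trans add_sq_le
  rw [← Real.exp_add, Real.exp_le_exp]
  linarith [mul_le_mul_of_nonneg_left this hb]

lemma enorm_integral_smul_mul_le_lintegral {α G : Type*} [MeasurableSpace α] {μ : Measure α}
    [NormedAddCommGroup G] [NormedSpace ℂ G] {k : α → ℂ} {g v : α → ℝ≥0∞} {c : ℝ≥0∞} (hc : c ≠ ⊤)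
    (hk : ∀ a, ‖k a‖ₑ * c ≤ g a * v a) (u : α → G) :
    ‖∫ a, k a • u a ∂μ‖ₑ * c ≤ ∫⁻ a, g a * (‖u a‖ₑ * v a) ∂μ :=
  calc ‖∫ a, k a • u a ∂μ‖ₑ * c ≤ (∫⁻ a, ‖k a • u a‖ₑ ∂μ) * c := by
        gcongr
        exact enorm_integral_le_lintegral_enorm _
    _ = ∫⁻ a, ‖u a‖ₑ * (‖k a‖ₑ * c) ∂μ := by
        rw [← lintegral_mul_const' _ _ hc]
        simp only [enorm_smul]
        congr! 2 with a
        ring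
    _ ≤ ∫⁻ a, ‖u a‖ₑ * (g a * v a) ∂μ :=
        lintegral_mono fun a => mul_le_mul' le_rfl (hk a)
    _ = ∫⁻ a, g a * (‖u a‖ₑ * v a) ∂μ := by
        congr! 2 with a
        ring

section GaussianKernel

variable {E F G : Type*} [NormedAddCommGroup E] [MeasurableSpace E] [BorelSpace E]
  [NormedAddCommGroup F] [NormedSpace ℝ F] [FiniteDimensional ℝ F] [MeasurableSpace F]
  [BorelSpace F] [NormedAddCommGroup G] [NormedSpace ℂ G] {ν : Measure F} [ν.IsAddHaarMeasure]
  {κ : F → E} {K : ℝ≥0} {b : ℝ}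

lemma memLp_two_exp_neg_mul_norm_sub_sq [SecondCountableTopology E] (hκ_meas : Measurable κ)
    (hκ : AntilipschitzWith K κ) (hb : 0 < b) (z : E) :
    MemLp (fun w => Real.exp (-b * ‖z - κ w‖ ^ 2)) 2 ν := by
  obtain ⟨A, hA⟩ := exists_lintegral_exp_neg_mul_norm_sub_sq_le ν hκ
    (mul_pos two_pos hb)
  have hmeas (b : ℝ) : Measurable fun w => Real.exp (-b * ‖z - κ w‖ ^ 2) := by fun_prop
  refine (memLp_two_iff_integrable_sq (hmeas b).aestronglyMeasurable).2 ?_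
  have sq_eq : (fun w => Real.exp (-b * ‖z - κ w‖ ^ 2) ^ 2) =
      fun w => Real.exp (-(2 * b) * ‖z - κ w‖ ^ 2) := by
    ext w
    rw [← Real.exp_nat_mul]
    ring_nf
  rw [sq_eq]
  exact lintegral_ofReal_ne_top_iff_integrable (hmeas _).aestronglyMeasurable
    (.of_forall fun w => by positivity) |>.1 ((hA z).trans_lt coe_lt_top).ne

theorem exists_lintegral_rpow_integral_smul_le_of_gaussian_kernel [NormedSpace ℝ E]
    [FiniteDimensional ℝ E] (μ : Measure E) [μ.IsAddHaarMeasure] (ν : Measure F)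
    [ν.IsAddHaarMeasure] (hκ_meas : Measurable κ)
    (hκ : AntilipschitzWith K κ) (hb : 0 < b) (C : ℝ≥0) {p : ℝ}
    (hp : 1 ≤ p) :
    ∃ M : ℝ≥0, ∀ {k : E → F → ℂ} {ω₁ : E → ℝ} {ω₂ : F → ℝ} {u : F → G},
      (∀ z w, ‖k z w‖ * ω₁ z ≤ C * Real.exp (-b * ‖z - κ w‖ ^ 2) * ω₂ w) →
      AEMeasurable ω₂ ν → AEStronglyMeasurable u ν →
      ∫⁻ z, (‖∫ w, k z w • u w ∂ν‖ₑ * ENNReal.ofReal (ω₁ z)) ^ p ∂μ ≤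
        M * ∫⁻ w, (‖u w‖ₑ * ENNReal.ofReal (ω₂ w)) ^ p ∂ν := by
  obtain ⟨A, hA⟩ := exists_lintegral_exp_neg_mul_norm_sub_sq_le ν hκ hb
  obtain ⟨B, hB⟩ := exists_lintegral_exp_neg_mul_norm_sub_sq_le μ
    (AntilipschitzWith.id (α := E)) hb
  refine ⟨(C * A) ^ (p - 1) * (C * B), fun {k ω₁ ω₂ u} hk hω₂ hu => ?_⟩
  set g : E → F → ℝ≥0∞ := fun z w => C * ENNReal.ofReal (Real.exp (-b * ‖z - κ w‖ ^ 2)) with hg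
  have hk_enorm (z : E) (w : F) :
      ‖k z w‖ₑ * ENNReal.ofReal (ω₁ z) ≤ g z w * ENNReal.ofReal (ω₂ w) := by
    simpa only [hg, ← ofReal_norm, ← ENNReal.ofReal_coe_nnreal, ← ENNReal.ofReal_mul, norm_nonneg,
      NNReal.coe_nonneg, mul_nonneg, Real.exp_nonneg] using ENNReal.ofReal_le_ofReal (hk z w)
  have hgA (z : E) : ∫⁻ w, g z w ∂ν ≤ C * A := by
    rw [lintegral_const_mul' _ _ coe_ne_top]
    gcongr
    exact hA z
  have hgB (w : F) : ∫⁻ z, g z w ∂μ ≤ C * B := by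
    rw [lintegral_const_mul' _ _ coe_ne_top]
    gcongr
    simpa only [norm_sub_rev, id] using hB (κ w)
  calc ∫⁻ z, (‖∫ w, k z w • u w ∂ν‖ₑ * ENNReal.ofReal (ω₁ z)) ^ p ∂μ
      ≤ ∫⁻ z, (∫⁻ w, g z w * (‖u w‖ₑ * ENNReal.ofReal (ω₂ w)) ∂ν) ^ p ∂μ := by
        refine lintegral_mono fun z => ENNReal.rpow_le_rpow ?_ (by positivity)
        exact enorm_integral_smul_mul_le_lintegral ofReal_ne_top (hk_enorm z) u
    _ ≤ (C * A) ^ (p - 1) * (C * B) * ∫⁻ w, (‖u w‖ₑ * ENNReal.ofReal (ω₂ w)) ^ p ∂ν :=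
        lintegral_rpow_lintegral_mul_le_of_schur hp (by fun_prop) (.of_forall hgA)
          (.of_forall hgB) (hu.enorm.mul hω₂.ennreal_ofReal)
    _ = _ := by
        rw [ENNReal.coe_mul, ENNReal.coe_rpow_of_nonneg _ (sub_nonneg.2 hp)]
        push_cast
        rfl

theorem differentiable_integral_smul_of_gaussian_kernel [NormedSpace ℂ E] [FiniteDimensional ℂ E]
    (hκ_meas : Measurable κ) (hκ : AntilipschitzWith K κ) (hb : 0 < b)
    {C : ℝ≥0} {k : E → F → ℂ} {ω₁ : E → ℝ} {ω₂ : F → ℝ} {u : F → G}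
    (hk_bound : ∀ z w, ‖k z w‖ * ω₁ z ≤ C * Real.exp (-b * ‖z - κ w‖ ^ 2) * ω₂ w)
    (hk_diff : ∀ w, Differentiable ℂ (k · w)) (hk_meas : ∀ z, AEStronglyMeasurable (k z) ν)
    (hω₁ : ∀ z, ∃ m > 0, ∀ᶠ z' in 𝓝 z, m ≤ ω₁ z') (hu_meas : AEStronglyMeasurable u ν)
    (hu : MemLp (fun w => ‖u w‖ * ω₂ w) 2 ν) :
    Differentiable ℂ fun z => ∫ w, k z w • u w ∂ν := by
  have := FiniteDimensional.proper ℂ E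
  intro z₀
  obtain ⟨m, hm, hω₁_ge⟩ := hω₁ z₀
  refine differentiableAt_integral_of_dominated
    (s := {z | m ≤ ω₁ z} ∩ Metric.closedBall z₀ 1)
    (bound := fun w => C * Real.exp b / m *
      (Real.exp (-(b / 2) * ‖z₀ - κ w‖ ^ 2) * (‖u w‖ * ω₂ w)))
    (inter_mem hω₁_ge (Metric.closedBall_mem_nhds z₀ one_pos))
    (fun z _ => (hk_meas z).smul hu_meas)
    (.of_forall fun w => ((hk_diff w).smul_const (u w)).differentiableOn)
    (.of_forall fun w z ⟨hz, hz₀⟩ => ?_)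
    (((memLp_two_exp_neg_mul_norm_sub_sq hκ_meas hκ (half_pos hb) z₀).integrable_mul
      hu).const_mul _)
  have hkm : ‖k z w‖ * m ≤ C * Real.exp (-b * ‖z - κ w‖ ^ 2) * ω₂ w :=
    (mul_le_mul_of_nonneg_left hz (norm_nonneg _)).trans (hk_bound z w)
  have hCω : 0 ≤ C * ω₂ w := by
    refine nonneg_of_mul_nonneg_left (b := Real.exp (-b * ‖z - κ w‖ ^ 2)) ?_ (by positivity)
    linarith [mul_nonneg (norm_nonneg (k z w)) hm.le]
  have gauss : Real.exp (-b * ‖z - κ w‖ ^ 2) ≤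
      Real.exp b * Real.exp (-(b / 2) * ‖z₀ - κ w‖ ^ 2) := by
    refine (exp_neg_mul_norm_sub_sq_le hb.le z z₀ (κ w)).trans ?_
    gcongr
    refine mul_le_of_le_one_right hb.le (pow_le_one₀ (norm_nonneg _) ?_)
    rwa [← dist_eq_norm]
  calc ‖k z w • u w‖ = ‖k z w‖ * m / m * ‖u w‖ := by rw [norm_smul, mul_div_cancel_right₀ _ hm.ne']
    _ ≤ C * ω₂ w * (Real.exp b * Real.exp (-(b / 2) * ‖z₀ - κ w‖ ^ 2)) / m * ‖u w‖ := by
      gcongr ?_ / m * ‖u w‖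
      exact (hkm.trans_eq (by ring)).trans (mul_le_mul_of_nonneg_left gauss hCω)
    _ = _ := by ring

end GaussianKernel

section Peetre

variable {E F : Type*} [SeminormedAddCommGroup E] [SeminormedAddCommGroup F] {κ : F → E} {K : ℝ≥0}

lemma one_add_norm_le_of_lipschitzWith (hκ : LipschitzWith K κ) (z : E) (w : F) :
    1 + ‖z‖ ≤ (1 + ‖κ 0‖ + K) * (1 + ‖w‖) * (1 + ‖z - κ w‖) := by
  have hKw : ‖κ w - κ 0‖ ≤ K * ‖w‖ := by simpa [dist_eq_norm] using hκ.dist_le_mul w 0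
  have hz : ‖z‖ ≤ ‖z - κ w‖ + (‖κ w - κ 0‖ + ‖κ 0‖) := by
    linarith [norm_le_norm_sub_add z (κ w), norm_le_norm_sub_add (κ w) (κ 0)]
  have : 0 ≤ (1 + ‖κ 0‖ + K) * (1 + ‖w‖) * (1 + ‖z - κ w‖) -
      (1 + ‖z - κ w‖ + K * ‖w‖ + ‖κ 0‖) := by
    ring_nf
    positivity
  linarith

lemma one_add_norm_le_of_antilipschitzWith (hκ : AntilipschitzWith K κ) (z : E) (w : F) :
    1 + ‖w‖ ≤ (1 + K * (1 + ‖κ 0‖)) * (1 + ‖z‖) * (1 + ‖z - κ w‖) := by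
  have hKw : ‖w‖ ≤ K * ‖κ w - κ 0‖ := by simpa [dist_eq_norm] using hκ.le_mul_dist w 0
  have hκw : ‖κ w - κ 0‖ ≤ ‖z - κ w‖ + ‖z‖ + ‖κ 0‖ := by
    linarith [norm_sub_le (κ w) (κ 0), norm_le_norm_sub_add (κ w) z, norm_sub_rev z (κ w)]
  have : 0 ≤ (1 + K * (1 + ‖κ 0‖)) * (1 + ‖z‖) * (1 + ‖z - κ w‖) -
      (1 + K * (‖z - κ w‖ + ‖z‖ + ‖κ 0‖)) := by
    ring_nf
    positivity
  linarith [mul_le_mul_of_nonneg_left hκw K.coe_nonneg]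

end Peetre

section JapaneseBracket

variable {n : ℕ}

lemma norm_sq_le_eSq (z : Fin n → ℂ) : ‖z‖ ^ 2 ≤ eSq z := by
  have hnonneg : 0 ≤ eSq z := Finset.sum_nonneg fun i _ => Complex.normSq_nonneg (z i)
  refine (Real.le_sqrt (norm_nonneg z) hnonneg).1 ((pi_norm_le_iff_of_nonneg (by positivity)).2
    fun i => Real.le_sqrt_of_sq_le ?_)
  rw [Complex.sq_norm]
  exact Finset.single_le_sum (f := fun i => Complex.normSq (z i))
    (fun i _ => Complex.normSq_nonneg _) (Finset.mem_univ i)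

lemma eSq_le_mul_norm_sq (z : Fin n → ℂ) : eSq z ≤ n * ‖z‖ ^ 2 := by
  calc eSq z ≤ ∑ _i : Fin n, ‖z‖ ^ 2 := by
        unfold eSq
        gcongr with i
        rw [← Complex.sq_norm]
        gcongr
        exact norm_le_pi_norm z i
    _ = n * ‖z‖ ^ 2 := by simp

lemma jb_pos (z : Fin n → ℂ) : 0 < jb z :=
  Real.sqrt_pos.2 (by linarith [norm_sq_le_eSq z, sq_nonneg ‖z‖])

lemma jb_le_mul_one_add_norm (z : Fin n → ℂ) : jb z ≤ (n + 1) * (1 + ‖z‖) := by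
  refine Real.sqrt_le_iff.2 ⟨by positivity, ?_⟩
  have : 0 ≤ ((n + 1) * (1 + ‖z‖)) ^ 2 - (1 + n * ‖z‖ ^ 2) := by
    ring_nf
    positivity
  linarith [eSq_le_mul_norm_sq z]

lemma one_add_norm_le_two_mul_jb (z : Fin n → ℂ) : 1 + ‖z‖ ≤ 2 * jb z := by
  have h := Real.abs_le_sqrt (x := (1 + ‖z‖) / 2) (y := 1 + eSq z)
    (by nlinarith [norm_sq_le_eSq z, sq_nonneg (1 - ‖z‖)])
  have := (le_abs_self _).trans h
  unfold jb
  linarith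

@[fun_prop]
lemma continuous_jb : Continuous (jb (n := n)) := by
  unfold jb eSq
  fun_prop

lemma continuous_jb_rpow (s : ℝ) : Continuous fun z : Fin n → ℂ => jb z ^ s :=
  continuous_jb.rpow_const fun z => .inl (jb_pos z).ne'

lemma exists_jb_le_mul_jb {κ : (Fin n → ℂ) → Fin n → ℂ} {K K' : ℝ≥0} (hκ : LipschitzWith K κ)
    (hκ' : AntilipschitzWith K' κ) :
    ∃ B : ℝ≥0, ∀ z w, jb z ≤ B * (1 + ‖z - κ w‖) * jb w ∧ jb w ≤ B * (1 + ‖z - κ w‖) * jb z := by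
  set A : ℝ≥0 := (1 + ‖κ 0‖₊ + K) + (1 + K' * (1 + ‖κ 0‖₊)) with hA
  have jb_le {x y : Fin n → ℂ} {d : ℝ} (hd : 0 ≤ d)
      (h : 1 + ‖x‖ ≤ A * (1 + ‖y‖) * (1 + d)) : jb x ≤ (2 * (n + 1) * A : ℝ≥0) * (1 + d) * jb y :=
    calc jb x ≤ (n + 1) * (1 + ‖x‖) := jb_le_mul_one_add_norm x
      _ ≤ (n + 1) * (A * (2 * jb y) * (1 + d)) := by
        gcongr
        refine h.trans ?_
        gcongr
        exact one_add_norm_le_two_mul_jb y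
      _ = (2 * (n + 1) * A : ℝ≥0) * (1 + d) * jb y := by
        push_cast
        ring
  refine ⟨2 * (n + 1) * A, fun z w => ⟨jb_le (norm_nonneg _) ?_, jb_le (norm_nonneg _) ?_⟩⟩
  · refine (one_add_norm_le_of_lipschitzWith hκ z w).trans ?_
    gcongr
    simp only [hA, NNReal.coe_add, NNReal.coe_one, coe_nnnorm]
    exact le_add_of_nonneg_right (by positivity)
  · refine (one_add_norm_le_of_antilipschitzWith hκ' z w).trans ?_
    gcongr
    simp only [hA, NNReal.coe_add, NNReal.coe_mul, NNReal.coe_one, coe_nnnorm]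
    exact le_add_of_nonneg_left (by positivity)

lemma exists_jb_rpow_le_mul_exp {κ : (Fin n → ℂ) → Fin n → ℂ} {K K' : ℝ≥0}
    (hκ : LipschitzWith K κ) (hκ' : AntilipschitzWith K' κ) {ε : ℝ} (hε : 0 < ε) (s : ℝ) :
    ∃ C : ℝ≥0, ∀ z w, jb z ^ s ≤ C * jb w ^ s * Real.exp (ε * ‖z - κ w‖ ^ 2) := by
  obtain ⟨B, hB⟩ := exists_jb_le_mul_jb hκ hκ'
  refine ⟨B ^ |s| * (Real.exp (|s| ^ 2 / (4 * ε))).toNNReal, fun z w => ?_⟩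
  calc jb z ^ s ≤ (B * (1 + ‖z - κ w‖)) ^ |s| * jb w ^ s :=
        rpow_le_rpow_abs_mul_rpow (jb_pos z) (jb_pos w) (hB z w).1 (hB z w).2 s
    _ = B ^ |s| * (1 + ‖z - κ w‖) ^ |s| * jb w ^ s := by
        rw [Real.mul_rpow (by positivity) (by positivity)]
    _ ≤ B ^ |s| * (Real.exp (|s| ^ 2 / (4 * ε)) * Real.exp (ε * ‖z - κ w‖ ^ 2)) * jb w ^ s := by
        have := jb_pos w
        gcongr
        exact one_add_rpow_le_exp_mul_exp_sq (norm_nonneg _) hε |s|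
    _ = _ := by
        rw [NNReal.coe_mul, NNReal.coe_rpow, Real.coe_toNNReal _ (Real.exp_nonneg _)]
        ring

end JapaneseBracket

section Bergman

variable {n : ℕ} {Φ : (Fin n → ℂ) → ℝ} {u : (Fin n → ℂ) → ℂ}

/-- The weight `⟨z⟩^s e^{-Φ(z)}`, chosen so that `‖u‖_s` is the `L²` norm of `weight Φ s * u`. -/
def weight (Φ : (Fin n → ℂ) → ℝ) (s : ℝ) (z : Fin n → ℂ) : ℝ := jb z ^ s * Real.exp (-Φ z)

/-- The integral kernel `a e^{2Ψ(z, w̄) - 2Φ(w)}` of the operator `berg a Ψ Φ`, with respect to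
Lebesgue measure. -/
def bergKernel (a : ℂ) (Ψ : (Fin n → ℂ) → (Fin n → ℂ) → ℂ) (Φ : (Fin n → ℂ) → ℝ)
    (z w : Fin n → ℂ) : ℂ :=
  a * Complex.exp (2 * Ψ z (star w)) * (Real.exp (-2 * Φ w) : ℂ)

lemma weight_pos (Φ : (Fin n → ℂ) → ℝ) (s : ℝ) (z : Fin n → ℂ) : 0 < weight Φ s z :=
  mul_pos (Real.rpow_pos_of_pos (jb_pos z) s) (Real.exp_pos _)

lemma measurable_weight (hΦ : Measurable Φ) (s : ℝ) : Measurable (weight Φ s) :=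
  (continuous_jb_rpow s).measurable.mul hΦ.neg.exp

lemma exists_eventually_le_weight {z : Fin n → ℂ} (hΦ : (𝓝 z).IsBoundedUnder (· ≤ ·) Φ) (s : ℝ) :
    ∃ m > 0, ∀ᶠ z' in 𝓝 z, m ≤ weight Φ s z' := by
  obtain ⟨B, hB⟩ := hΦ
  have hjb : 0 < jb z ^ s := Real.rpow_pos_of_pos (jb_pos z) s
  refine ⟨jb z ^ s / 2 * Real.exp (-B), by positivity, ?_⟩
  filter_upwards [eventually_map.1 hB,
    (continuous_jb_rpow s).continuousAt.eventually_const_lt (half_lt_self hjb)] with z' hΦz' hjbz'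
  have : 0 ≤ jb z' ^ s := Real.rpow_nonneg (jb_pos z').le s
  unfold weight
  gcongr

lemma hnorm_eq_lintegral_rpow (Φ : (Fin n → ℂ) → ℝ) (s : ℝ) (u : (Fin n → ℂ) → ℂ) :
    hnorm Φ s u = ∫⁻ z, (‖u z‖ₑ * ENNReal.ofReal (weight Φ s z)) ^ (2 : ℝ) := by
  refine lintegral_congr fun z => ?_
  have weight_sq : jb z ^ (2 * s) * Real.exp (-2 * Φ z) = weight Φ s z ^ 2 := by
    rw [weight, mul_pow, ← Real.exp_nat_mul, mul_comm 2 s, Real.rpow_mul (jb_pos z).le,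
      Real.rpow_two]
    ring_nf
  rw [weight_sq, ENNReal.ofReal_pow (weight_pos Φ s z).le, ENNReal.rpow_two, mul_pow,
    enorm_eq_nnnorm]

lemma memLp_two_norm_mul_weight {s : ℝ} (hΦ : Measurable Φ) (hu_meas : AEStronglyMeasurable u)
    (hu : hnorm Φ s u < ⊤) : MemLp (fun w => ‖u w‖ * weight Φ s w) 2 := by
  refine ⟨hu_meas.norm.mul (measurable_weight hΦ s).aestronglyMeasurable, ?_⟩
  rw [eLpNorm_lt_top_iff_lintegral_rpow_enorm_lt_top two_ne_zero ofNat_ne_top]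
  simpa only [toReal_ofNat, enorm_mul, enorm_norm, Real.enorm_of_nonneg (weight_pos Φ s _).le,
    hnorm_eq_lintegral_rpow] using hu

lemma berg_eq_integral_bergKernel_smul (a : ℂ) (Ψ : (Fin n → ℂ) → (Fin n → ℂ) → ℂ)
    (Φ : (Fin n → ℂ) → ℝ) (u : (Fin n → ℂ) → ℂ) :
    berg a Ψ Φ u = fun z => ∫ w, bergKernel a Ψ Φ z w • u w := by
  ext z
  rw [berg, ← integral_const_mul]
  congr! 2
  rw [bergKernel, smul_eq_mul]
  ring

lemma norm_bergKernel (a : ℂ) (Ψ : (Fin n → ℂ) → (Fin n → ℂ) → ℂ) (Φ : (Fin n → ℂ) → ℝ)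
    (z w : Fin n → ℂ) :
    ‖bergKernel a Ψ Φ z w‖ = ‖a‖ * Real.exp (2 * (Ψ z (star w)).re - 2 * Φ w) := by
  rw [bergKernel, norm_mul, norm_mul, Complex.norm_exp, Complex.norm_real,
    Real.norm_of_nonneg (Real.exp_pos _).le, mul_assoc, ← Real.exp_add]
  simp [sub_eq_add_neg]

lemma exists_norm_bergKernel_mul_weight_le {Φ₁ Φ₂ : (Fin n → ℂ) → ℝ}
    {κ : (Fin n → ℂ) → Fin n → ℂ} {K K' : ℝ≥0} (hκ : LipschitzWith K κ)
    (hκ' : AntilipschitzWith K' κ) {Ψ : (Fin n → ℂ) → (Fin n → ℂ) → ℂ} {c : ℝ} (hc : 0 < c)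
    (hest : ∀ z w, 2 * (Ψ z (star w)).re - Φ₁ z - Φ₂ w ≤ -c * eSq (z - κ w)) (a : ℂ) (s : ℝ) :
    ∃ C : ℝ≥0, ∀ z w, ‖bergKernel a Ψ Φ₂ z w‖ * weight Φ₁ s z ≤
      C * Real.exp (-(c / 2) * ‖z - κ w‖ ^ 2) * weight Φ₂ s w := by
  obtain ⟨C, hC⟩ := exists_jb_rpow_le_mul_exp hκ hκ' (half_pos hc) s
  refine ⟨‖a‖₊ * C, fun z w => ?_⟩
  have phase : 2 * (Ψ z (star w)).re - 2 * Φ₂ w + -Φ₁ z ≤ -c * ‖z - κ w‖ ^ 2 + -Φ₂ w := by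
    linarith [hest z w, mul_le_mul_of_nonneg_left (norm_sq_le_eSq (z - κ w)) hc.le]
  calc ‖bergKernel a Ψ Φ₂ z w‖ * weight Φ₁ s z
      = ‖a‖ * jb z ^ s * Real.exp (2 * (Ψ z (star w)).re - 2 * Φ₂ w + -Φ₁ z) := by
        rw [norm_bergKernel, weight, Real.exp_add]
        ring
    _ ≤ ‖a‖ * (C * jb w ^ s * Real.exp (c / 2 * ‖z - κ w‖ ^ 2)) *
          Real.exp (-c * ‖z - κ w‖ ^ 2 + -Φ₂ w) := by
        have : 0 ≤ jb w ^ s := Real.rpow_nonneg (jb_pos w).le s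
        gcongr
        exact hC z w
    _ = ‖a‖ * C * Real.exp (c / 2 * ‖z - κ w‖ ^ 2 + -c * ‖z - κ w‖ ^ 2) * weight Φ₂ s w := by
        rw [weight, Real.exp_add, Real.exp_add]
        ring
    _ = _ := by
        rw [NNReal.coe_mul, coe_nnnorm]
        ring_nf

theorem stmt_8_general {Φ₁ Φ₂ : (Fin n → ℂ) → ℝ}
    (hΦ₁ : ∀ z, (𝓝 z).IsBoundedUnder (· ≤ ·) Φ₁) (hΦ₂ : Measurable Φ₂)
    {κ : (Fin n → ℂ) → Fin n → ℂ} {K K' : ℝ≥0} (hκ : LipschitzWith K κ)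
    (hκ' : AntilipschitzWith K' κ) (a : ℂ)
    {Ψ : (Fin n → ℂ) → (Fin n → ℂ) → ℂ} (hΨ_diff : ∀ θ, Differentiable ℂ (Ψ · θ))
    (hΨ_meas : ∀ z, Measurable (Ψ z)) {c : ℝ} (hc : 0 < c)
    (hest : ∀ z w, 2 * (Ψ z (star w)).re - Φ₁ z - Φ₂ w ≤ -c * eSq (z - κ w)) (s : ℝ) :
    ∃ M : ℝ, 0 < M ∧ ∀ u : (Fin n → ℂ) → ℂ, AEStronglyMeasurable u → hnorm Φ₂ s u < ⊤ →
      Differentiable ℂ (berg a Ψ Φ₂ u) ∧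
      hnorm Φ₁ s (berg a Ψ Φ₂ u) ≤ ENNReal.ofReal (M ^ 2) * hnorm Φ₂ s u := by
  have hκ_meas : Measurable κ := hκ.continuous.measurable
  obtain ⟨C, hC⟩ := exists_norm_bergKernel_mul_weight_le hκ hκ' hc hest a s
  obtain ⟨M, hM⟩ := exists_lintegral_rpow_integral_smul_le_of_gaussian_kernel (G := ℂ)
    volume volume hκ_meas hκ' (half_pos hc) C one_le_two
  have hM_le : (M : ℝ≥0∞) ≤ ENNReal.ofReal ((M + 1 : ℝ) ^ 2) := by
    rw [← ENNReal.ofReal_coe_nnreal]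
    gcongr
    nlinarith [M.coe_nonneg]
  refine ⟨M + 1, by positivity, fun u hu_meas hu => ?_⟩
  rw [berg_eq_integral_bergKernel_smul]
  constructor
  · refine differentiable_integral_smul_of_gaussian_kernel hκ_meas hκ' (half_pos hc) hC
      (fun w => ?_) (fun z => ?_) (fun z => exists_eventually_le_weight (hΦ₁ z) s) hu_meas
      (memLp_two_norm_mul_weight hΦ₂ hu_meas hu)
    · have := hΨ_diff (star w)
      unfold bergKernel
      fun_prop
    · have := (hΨ_meas z).comp continuous_star.measurable
      unfold bergKernel
      exact Measurable.aestronglyMeasurable (by fun_prop)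
  · rw [hnorm_eq_lintegral_rpow, hnorm_eq_lintegral_rpow]
    refine (hM hC (measurable_weight hΦ₂ s).aemeasurable hu_meas).trans ?_
    gcongr

lemma IsRQuad.continuous (hΦ : IsRQuad Φ) : Continuous Φ := by
  obtain ⟨B, hB⟩ := hΦ
  rw [funext hB]
  exact B.toContinuousBilinearMap.continuous₂.comp (continuous_id.prodMk continuous_id)

lemma IsCQuad2.differentiable {Ψ : (Fin n → ℂ) → (Fin n → ℂ) → ℂ} (hΨ : IsCQuad2 Ψ) :
    Differentiable ℂ (fun p : (Fin n → ℂ) × (Fin n → ℂ) => Ψ p.1 p.2) := by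
  obtain ⟨B, hB⟩ := hΨ
  simp only [hB]
  have : Differentiable ℂ fun p => B.toContinuousBilinearMap p p := by fun_prop
  exact this

end Bergman

end

/-- Let `Φ₁, Φ₂` be strictly plurisubharmonic quadratic forms on `ℂⁿ`,
`κ : ℂⁿ → ℂⁿ` an `ℝ`-linear isomorphism, `â ∈ ℂ`, and `Ψ` a holomorphic quadratic form on
`ℂ^{2n}` with `2 Re Ψ(z,w̄) − Φ₁(z) − Φ₂(w) ≤ −c|z − κ(w)|²`.  Then for every `s ∈ ℝ` there
is `M > 0` such that for every `u ∈ H^s_{Φ₂}`, `G u (z) = â ∫ e^{2Ψ(z,w̄)} u(w) e^{-2Φ₂(w)} dL(w)`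
is entire and `‖G u‖²_{Φ₁,s} ≤ M² ‖u‖²_{Φ₂,s}`. -/
theorem stmt_8 (n : ℕ) (hn : 1 ≤ n) (Φ₁ Φ₂ : (Fin n → ℂ) → ℝ)
    (hΦ₁ : IsSPSH Φ₁) (hΦ₂ : IsSPSH Φ₂)
    (κ : (Fin n → ℂ) ≃ₗ[ℝ] (Fin n → ℂ)) (a : ℂ)
    (Ψ : (Fin n → ℂ) → (Fin n → ℂ) → ℂ) (hΨ : IsCQuad2 Ψ)
    (c : ℝ) (hc : 0 < c)
    (hest : ∀ z w : Fin n → ℂ,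
        2 * (Ψ z (star w)).re - Φ₁ z - Φ₂ w ≤ -c * eSq (z - κ w))
    (s : ℝ) :
    ∃ M : ℝ, 0 < M ∧ ∀ u : (Fin n → ℂ) → ℂ, Differentiable ℂ u → hnorm Φ₂ s u < ⊤ →
      Differentiable ℂ (berg a Ψ Φ₂ u) ∧
      hnorm Φ₁ s (berg a Ψ Φ₂ u) ≤ ENNReal.ofReal (M ^ 2) * hnorm Φ₂ s u := by
  have hκ : LipschitzWith _ κ := κ.toContinuousLinearEquiv.lipschitz
  have hκ' : AntilipschitzWith _ κ := κ.toContinuousLinearEquiv.antilipschitz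
  obtain ⟨M, hM, hMu⟩ := stmt_8_general
    (fun z => (hΦ₁.1.continuous.tendsto z).isBoundedUnder_le) hΦ₂.1.continuous.measurable
    hκ hκ' a
    (fun θ => hΨ.differentiable.comp (differentiable_id.prodMk (differentiable_const θ)))
    (fun z => (hΨ.differentiable.continuous.comp (by fun_prop : Continuous (z, ·))).measurable)
    hc hest s
  exact ⟨M, hM, fun u hu => hMu u hu.continuous.aestronglyMeasurable⟩
end
end
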